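/- Assume the Gaussian-basis model where the planted vector v ∈ ℝ^N is random with i.i.d. Bernoulli–Rademacher entries BR(N,ρ) (each entry equals 0 with probability 1−ρ and ±1/√(Nρ) each with probability ρ/2): let Y ∈ ℝ^{N×n} have first column v and remaining n−1 columns i.i.d. N(0, (1/N) I_N), let Q ∈ ℝ^{n×n} be an arbitrary orthogonal matrix, and observe Ỹ = YQ. Let M̃ := Σ_{i=1}^N (‖ỹ_i‖² − (n−1)/N) ỹ_i ỹ_iᵀ − (3/N) I_n with ỹ_iᵀ the rows of Ỹ, and let ũ be the unit leading eigenvector of M̃. Fix a constant c₁ ∈ (0, 0.1). There exist constants C₂, c₃ > 0 depending only on c₁ such that for every δ ∈ (0,1/2): if N ≥ log⁷(N/δ), ρ ≥ C₂·log(1/δ)/N, |ρ − 1/3| ≥ c₁, and (nρ/√N + √(n/N))·log(N/δ) ≤ c₃, then with probability at least 1−δ there is a sign s ∈ {±1} such that the vector with j-th entry (1/√(Nρ))·sign(s·(Ỹũ)_j)·1{|(Ỹũ)_j| ≥ 0.5/√(Nρ)} equals v exactly. -/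

import Mathlib

open MeasureTheory ProbabilityTheory Matrix

/-- Euclidean norm of a vector in `ℝ^k`. -/
noncomputable def eucNorm {k : ℕ} (v : Fin k → ℝ) : ℝ := Real.sqrt (∑ i, (v i) ^ 2)

/-- ℓ_p norm of a vector in `ℝ^k`. -/
noncomputable def lpNorm {k : ℕ} (p : ℝ) (v : Fin k → ℝ) : ℝ := (∑ i, |v i| ^ p) ^ (1 / p)

/-- Supremum (ℓ_∞) norm of a vector in `ℝ^k`. -/
noncomputable def supNorm {k : ℕ} (v : Fin k → ℝ) : ℝ := ⨆ i, |v i|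

/-- The Gaussian measure `N(0, σ2 · I_k)` on `ℝ^k`. -/
noncomputable def gaussVec (k : ℕ) (σ2 : NNReal) : Measure (Fin k → ℝ) :=
  Measure.pi fun _ => gaussianReal 0 σ2

instance (k : ℕ) (σ2 : NNReal) : IsProbabilityMeasure (gaussVec k σ2) := by
  unfold gaussVec; infer_instance

/-- The law of `N` i.i.d. samples from `N(0, σ2 · I_k)`. -/
noncomputable def iidGaussVec (N k : ℕ) (σ2 : NNReal) : Measure (Fin N → Fin k → ℝ) :=
  Measure.pi fun _ => gaussVec k σ2

/-- Concatenation `(a, bᵀ)ᵀ ∈ ℝ^n` of a scalar `a` with a vector `b ∈ ℝ^{n-1}`. -/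
noncomputable def rowCat {n : ℕ} (a : ℝ) (b : Fin (n - 1) → ℝ) : Fin n → ℝ :=
  fun j => if h : (j : ℕ) = 0 then a else b ⟨(j : ℕ) - 1, by have := j.isLt; omega⟩

/-- The `N × n` matrix whose rows are `y_iᵀ = (v_i, b_iᵀ)`, i.e. whose first column is `v`
and whose remaining `n - 1` columns are given by `B`. -/
noncomputable def gaussBasis {N n : ℕ} (v : Fin N → ℝ) (B : Fin N → Fin (n - 1) → ℝ) :
    Matrix (Fin N) (Fin n) ℝ :=
  Matrix.of fun i => rowCat (v i) (B i)

/-- The matrix `M(Y) = ∑_i (‖y_i‖² - (n-1)/N) y_i y_iᵀ - (3/N) I_n` built from the rows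
`y_iᵀ` of `Y`. -/
noncomputable def specMat {N n : ℕ} (Y : Matrix (Fin N) (Fin n) ℝ) :
    Matrix (Fin n) (Fin n) ℝ :=
  (∑ i, ((∑ j, (Y i j) ^ 2) - ((n : ℝ) - 1) / N) • Matrix.vecMulVec (Y i) (Y i))
    - ((3 : ℝ) / N) • (1 : Matrix (Fin n) (Fin n) ℝ)

/-- `u` is a unit leading eigenvector of the (symmetric) matrix `M`: a unit eigenvector
whose eigenvalue has the largest absolute value among all eigenvalues of `M`. -/
def IsLeadingEigen {n : ℕ} (M : Matrix (Fin n) (Fin n) ℝ) (u : Fin n → ℝ) : Prop :=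
  eucNorm u = 1 ∧ ∃ μ : ℝ, M.mulVec u = μ • u ∧
    ∀ μ' : ℝ, (∃ w : Fin n → ℝ, w ≠ 0 ∧ M.mulVec w = μ' • w) → |μ'| ≤ |μ|

/-- The quantity `η = η(N, n, v, δ)` with universal constant `C`. -/
noncomputable def etaBound (C : ℝ) (N n : ℕ) (v : Fin N → ℝ) (δ : ℝ) : ℝ :=
  C * ((eucNorm v + 1) * n * Real.sqrt (Real.log (N / δ)) / (N : ℝ) ^ ((3 : ℝ) / 2)
    + lpNorm 4 v ^ 2 * Real.sqrt (n * Real.log (N / δ)) / N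
    + lpNorm 6 v ^ 3 * (Real.sqrt n + Real.sqrt (Real.log (N / δ))) / Real.sqrt N
    + supNorm v ^ 2 * (n * Real.log (N / δ) + (Real.log (N / δ)) ^ 2) / N
    + (n * Real.log (N / δ)) ^ ((3 : ℝ) / 2) / (N : ℝ) ^ 2
    + |eucNorm v ^ 2 - 1| / N)

/-- The Bernoulli–Rademacher distribution on `ℝ`: `0` w.p. `1-ρ`, `±1/√(Nρ)` w.p. `ρ/2` each. -/
noncomputable def brMeasure (N : ℕ) (ρ : ℝ) : Measure ℝ :=
  (Real.toNNReal (1 - ρ)) • Measure.dirac 0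
    + (Real.toNNReal (ρ / 2)) • Measure.dirac (Real.sqrt (N * ρ))⁻¹
    + (Real.toNNReal (ρ / 2)) • Measure.dirac (-(Real.sqrt (N * ρ))⁻¹)

instance (N : ℕ) (ρ : ℝ) : IsFiniteMeasure (brMeasure N ρ) := by
  unfold brMeasure; infer_instance

/-- The law of a Bernoulli–Rademacher vector `v ∼ BR(N, ρ)` with i.i.d. entries. -/
noncomputable def brVec (N : ℕ) (ρ : ℝ) : Measure (Fin N → ℝ) :=
  Measure.pi fun _ => brMeasure N ρ

instance (N : ℕ) (ρ : ℝ) : IsFiniteMeasure (brVec N ρ) := by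
  unfold brVec; infer_instance

/-!
Rotating the eigenvector reduces to `Q = 1`. After scaling by `√N` the rows of the matrix are
`(qᵢ, zᵢ)` with `qᵢ = √N vᵢ ∈ {0, ± 1 / √ρ}` and `zᵢ` standard Gaussian. With
`wᵢ = qᵢ² + ‖zᵢ‖² - dim`, the matrix `N² M̃` has corner close to `(3 N / ρ) (1/3 - ρ)`, while its
Gaussian block and its cross term are small compared with `H = κ N / ρ`. Hence its leading
eigenvalue is a large multiple of `H` and the Gaussian part `u` of the leading eigenvector is small.

Exact recovery needs each `⟨zᵢ, u⟩` to be small, although `u` depends on `zᵢ`. The eigenvector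
equation for `u` is expanded in a Neumann series with the row `i` erased: the resulting Krylov
vectors are independent of `zᵢ`, so Gaussian tails control their inner products with `zᵢ`, and
putting the row back is a rank-one perturbation.
-/

namespace PlantedVector

open Real (exp log)
open ENNReal (ofReal)

/-! ### Gaussian moments -/

lemma one_le_one_sub_mul_exp_add_sq {y : ℝ} (hy : |y| ≤ 1 / 2) :
    1 ≤ (1 - y) * exp (y + y ^ 2) := by
  have hy' := (abs_le.1 hy).2
  rcases le_total y 0 with h | h
  · calc (1 : ℝ) ≤ (1 - y) * (y + y ^ 2 + 1) := by nlinarith [sq_nonneg y]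
      _ ≤ (1 - y) * exp (y + y ^ 2) :=
        mul_le_mul_of_nonneg_left (Real.add_one_le_exp _) (by linarith)
  · have hpoly : 0 ≤ y ^ 2 * ((1 - y) * (1 + y) ^ 2 / 2 - y) :=
      mul_nonneg (by positivity) (by nlinarith [mul_nonneg h h])
    calc (1 : ℝ) ≤ (1 - y) * (1 + (y + y ^ 2) + (y + y ^ 2) ^ 2 / 2) := by nlinarith
      _ ≤ (1 - y) * exp (y + y ^ 2) :=
        mul_le_mul_of_nonneg_left (Real.quadratic_le_exp_of_nonneg (by positivity)) (by linarith)

lemma lintegral_exp_mul_sq_gaussianReal {s : ℝ} (hs : s < 1 / 2) :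
    ∫⁻ x, ofReal (exp (s * x ^ 2)) ∂gaussianReal 0 1 = ofReal (√(1 / (1 - 2 * s))) := by
  have hdensity (x : ℝ) : (gaussianPDF 0 1 * fun x => ofReal (exp (s * x ^ 2))) x
      = ofReal ((√(2 * Real.pi))⁻¹ * exp (-(1 / 2 - s) * x ^ 2)) := by
    rw [Pi.mul_apply, gaussianPDF, ← ENNReal.ofReal_mul (gaussianPDFReal_nonneg _ _ _),
      gaussianPDFReal, mul_assoc, ← Real.exp_add]
    congr 3
    · simp
    · simp only [NNReal.coe_one, sub_zero]; ring
  rw [gaussianReal_of_var_ne_zero 0 one_ne_zero,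
    lintegral_withDensity_eq_lintegral_mul _ (measurable_gaussianPDF 0 1) (by fun_prop)]
  simp_rw [hdensity]
  rw [← ofReal_integral_eq_lintegral_ofReal
    ((integrable_exp_neg_mul_sq (by linarith)).const_mul _)
    (Filter.Eventually.of_forall fun x => by positivity),
    integral_const_mul, integral_gaussian, ← Real.sqrt_inv, ← Real.sqrt_mul (by positivity)]
  congr 2
  field_simp [show 1 / 2 - s ≠ 0 by linarith, show 1 - 2 * s ≠ 0 by linarith]

lemma lintegral_exp_mul_sq_sub_one_le {s : ℝ} (hs : |s| ≤ 1 / 4) :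
    ∫⁻ x, ofReal (exp (s * (x ^ 2 - 1))) ∂gaussianReal 0 1 ≤ ofReal (exp (2 * s ^ 2)) := by
  have hs' := (abs_le.1 hs).2
  have hsplit (x : ℝ) :
      ofReal (exp (s * (x ^ 2 - 1))) = ofReal (exp (-s)) * ofReal (exp (s * x ^ 2)) := by
    rw [← ENNReal.ofReal_mul (by positivity), ← Real.exp_add]
    ring_nf
  have hsqrt : √(1 / (1 - 2 * s)) ≤ exp (s + 2 * s ^ 2) := by
    refine Real.sqrt_le_iff.2 ⟨by positivity, ?_⟩
    rw [div_le_iff₀ (by linarith), ← Real.exp_nat_mul]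
    calc (1 : ℝ) ≤ (1 - 2 * s) * exp (2 * s + (2 * s) ^ 2) :=
          one_le_one_sub_mul_exp_add_sq (by rw [abs_mul]; norm_num; linarith)
      _ = _ := by push_cast; ring_nf
  simp_rw [hsplit]
  rw [lintegral_const_mul _ (by fun_prop), lintegral_exp_mul_sq_gaussianReal (by linarith),
    ← ENNReal.ofReal_mul (by positivity)]
  refine ENNReal.ofReal_le_ofReal ?_
  calc exp (-s) * √(1 / (1 - 2 * s)) ≤ exp (-s) * exp (s + 2 * s ^ 2) := by gcongr
    _ = exp (2 * s ^ 2) := by rw [← Real.exp_add]; ring_nf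

lemma integrable_pow_gaussianReal (n : ℕ) : Integrable (fun x : ℝ => x ^ n) (gaussianReal 0 1) :=
  integrable_pow_of_mem_interior_integrableExpSet (X := id) (by simp) n

lemma hasDerivAt_integral_pow_mul_exp_gaussianReal (n : ℕ) (t : ℝ) :
    HasDerivAt (fun t => ∫ x : ℝ, x ^ n * exp (t * x) ∂gaussianReal 0 1)
      (∫ x : ℝ, x ^ (n + 1) * exp (t * x) ∂gaussianReal 0 1) t :=
  hasDerivAt_integral_pow_mul_exp_real (X := id) (μ := gaussianReal 0 1) (by simp) n

lemma integral_exp_mul_gaussianReal (t : ℝ) :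
    ∫ x : ℝ, exp (t * x) ∂gaussianReal 0 1 = exp (t ^ 2 / 2) := by
  simpa [mgf] using congrFun (mgf_id_gaussianReal (μ := 0) (v := 1)) t

lemma integral_mul_exp_gaussianReal (t : ℝ) :
    ∫ x : ℝ, x * exp (t * x) ∂gaussianReal 0 1
      = t * ∫ x : ℝ, exp (t * x) ∂gaussianReal 0 1 := by
  have hderiv := hasDerivAt_integral_pow_mul_exp_gaussianReal 0 t
  simp only [pow_zero, one_mul, zero_add, pow_one, integral_exp_mul_gaussianReal] at hderiv
  have hexp : HasDerivAt (fun t : ℝ => exp (t ^ 2 / 2)) (exp (t ^ 2 / 2) * t) t := by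
    convert! ((hasDerivAt_pow 2 t).div_const 2).exp using 2
    simp
  rw [hderiv.unique hexp, integral_exp_mul_gaussianReal, mul_comm]

lemma integral_pow_add_two_mul_exp_gaussianReal (n : ℕ) (t : ℝ) :
    ∫ x : ℝ, x ^ (n + 2) * exp (t * x) ∂gaussianReal 0 1
      = t * ∫ x : ℝ, x ^ (n + 1) * exp (t * x) ∂gaussianReal 0 1
        + (n + 1) * ∫ x : ℝ, x ^ n * exp (t * x) ∂gaussianReal 0 1 := by
  induction n generalizing t with
  | zero =>
    have hderiv := hasDerivAt_integral_pow_mul_exp_gaussianReal 1 t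
    have hprod := (hasDerivAt_id t).mul (hasDerivAt_integral_pow_mul_exp_gaussianReal 0 t)
    simp only [pow_one, integral_mul_exp_gaussianReal] at hderiv
    rw [hderiv.unique (hprod.congr_of_eventuallyEq (.of_forall fun t => by simp))]
    simp only [id, zero_add, pow_zero, CharP.cast_eq_zero]
    ring
  | succ n ih =>
    have hderiv := hasDerivAt_integral_pow_mul_exp_gaussianReal (n + 2) t
    have hsum := ((hasDerivAt_id t).mul
      (hasDerivAt_integral_pow_mul_exp_gaussianReal (n + 1) t)).add
        ((hasDerivAt_integral_pow_mul_exp_gaussianReal n t).const_mul ((n : ℝ) + 1))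
    rw [hderiv.unique (hsum.congr_of_eventuallyEq (.of_forall fun t => by simp [ih]))]
    simp only [id]
    push_cast
    ring

lemma integral_pow_add_two_gaussianReal (n : ℕ) :
    ∫ x : ℝ, x ^ (n + 2) ∂gaussianReal 0 1 = (n + 1) * ∫ x : ℝ, x ^ n ∂gaussianReal 0 1 := by
  simpa using integral_pow_add_two_mul_exp_gaussianReal n 0

lemma integral_sq_gaussianReal : ∫ x : ℝ, x ^ 2 ∂gaussianReal 0 1 = 1 := by
  simpa using integral_pow_add_two_gaussianReal 0

lemma integral_pow_four_gaussianReal : ∫ x : ℝ, x ^ 4 ∂gaussianReal 0 1 = 3 := by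
  rw [integral_pow_add_two_gaussianReal 2, integral_sq_gaussianReal]
  norm_num

lemma lintegral_pi_prod {ι : Type*} [Fintype ι] {X : ι → Type*} [∀ i, MeasurableSpace (X i)]
    (μ : ∀ i, Measure (X i)) [∀ i, IsProbabilityMeasure (μ i)] (f : ∀ i, X i → ENNReal)
    (hf : ∀ i, Measurable (f i)) :
    ∫⁻ x, ∏ i, f i (x i) ∂Measure.pi μ = ∏ i, ∫⁻ y, f i y ∂μ i := by
  rw [lintegral_prod_eq_prod_lintegral_of_indepFun Finset.univ _
    (iIndepFun_pi (μ := μ) (X := f) fun i => (hf i).aemeasurable)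
    fun i => (hf i).comp (measurable_pi_apply i)]
  refine Finset.prod_congr rfl fun i _ => ?_
  conv_rhs => rw [← (measurePreserving_eval μ i).map_eq]
  rw [lintegral_map (hf i) (measurable_pi_apply i)]

lemma integrable_and_integral_centered_sq_mul_sq {ι : Type*} [Fintype ι] [DecidableEq ι]
    (i j : ι) :
    Integrable (fun y : ι → ℝ => (y i ^ 2 - 1) * y j ^ 2) (Measure.pi fun _ => gaussianReal 0 1) ∧
      ∫ y : ι → ℝ, (y i ^ 2 - 1) * y j ^ 2 ∂(Measure.pi fun _ => gaussianReal 0 1)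
        = if i = j then 2 else 0 := by
  have hcentered : Integrable (fun y : ℝ => y ^ 2 - 1) (gaussianReal 0 1) :=
    (integrable_pow_gaussianReal 2).sub (integrable_const 1)
  rcases eq_or_ne i j with rfl | hij
  · have hdiag : Integrable (fun y : ℝ => (y ^ 2 - 1) * y ^ 2) (gaussianReal 0 1) := by
      simp_rw [sub_mul, one_mul, ← pow_add]
      exact (integrable_pow_gaussianReal 4).sub (integrable_pow_gaussianReal 2)
    refine ⟨integrable_comp_eval (μ := fun _ : ι => gaussianReal 0 1) hdiag, ?_⟩
    rw [integral_comp_eval (μ := fun _ : ι => gaussianReal 0 1)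
      (f := fun y : ℝ => (y ^ 2 - 1) * y ^ 2) hdiag.aestronglyMeasurable]
    simp_rw [sub_mul, one_mul, ← pow_add]
    rw [integral_sub (integrable_pow_gaussianReal 4) (integrable_pow_gaussianReal 2),
      integral_pow_four_gaussianReal, integral_sq_gaussianReal]
    norm_num
  · have hindep := ((iIndepFun_pi (μ := fun _ : ι => gaussianReal 0 1) (X := fun _ (y : ℝ) => y)
      fun _ => by fun_prop).indepFun hij).comp (φ := fun y => y ^ 2 - 1) (ψ := fun y => y ^ 2)
      (by fun_prop) (by fun_prop)
    have hi := integrable_comp_eval (μ := fun _ : ι => gaussianReal 0 1) (i := i) hcentered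
    have hj := integrable_comp_eval (μ := fun _ : ι => gaussianReal 0 1) (i := j)
      (integrable_pow_gaussianReal 2)
    refine ⟨hindep.integrable_mul hi hj, ?_⟩
    have hmean : ∫ y : ι → ℝ, (y i ^ 2 - 1) ∂(Measure.pi fun _ => gaussianReal 0 1) = 0 := by
      rw [integral_comp_eval (μ := fun _ : ι => gaussianReal 0 1) (f := fun y : ℝ => y ^ 2 - 1)
        hcentered.aestronglyMeasurable, integral_sub (integrable_pow_gaussianReal 2)
        (integrable_const 1), integral_sq_gaussianReal]
      simp
    rw [if_neg hij]
    exact (hindep.integral_fun_mul_eq_mul_integral hi.aestronglyMeasurable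
      hj.aestronglyMeasurable).trans (by simp [hmean])

section StdGaussianMoments

variable {E : Type*} [NormedAddCommGroup E] [InnerProductSpace ℝ E]

/-- The deviation of `‖z‖²` from the dimension, its mean when `z` is a standard Gaussian vector. -/
noncomputable def excess (z : E) : ℝ := ‖z‖ ^ 2 - Module.finrank ℝ E

lemma excess_neg (z : E) : excess (-z) = excess z := by rw [excess, excess, norm_neg]

@[fun_prop]
lemma continuous_excess : Continuous (excess : E → ℝ) := by
  unfold excess
  fun_prop

lemma norm_sum_smul_sq {ι : Type*} [Fintype ι] (b : OrthonormalBasis ι ℝ E) (y : ι → ℝ) :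
    ‖∑ i, y i • b i‖ ^ 2 = ∑ i, y i ^ 2 := by
  simp_rw [← b.sum_sq_norm_inner_right, b.orthonormal.inner_right_fintype, Real.norm_eq_abs, sq_abs]

lemma excess_sum_smul {ι : Type*} [Fintype ι] (b : OrthonormalBasis ι ℝ E) (y : ι → ℝ) :
    excess (∑ i, y i • b i) = ∑ i, (y i ^ 2 - 1) := by
  rw [excess, norm_sum_smul_sq, Finset.sum_sub_distrib, Finset.sum_const, Finset.card_univ,
    Module.finrank_eq_card_basis b.toBasis, nsmul_one]

variable [MeasurableSpace E] [BorelSpace E]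

@[fun_prop]
lemma measurable_excess : Measurable (excess : E → ℝ) := continuous_excess.measurable

variable [FiniteDimensional ℝ E]

lemma map_inner_stdGaussian (x : E) :
    (stdGaussian E).map (fun z => inner ℝ x z) = (gaussianReal 0 1).map (fun h => ‖x‖ * h) := by
  have hmap := IsGaussian.map_eq_gaussianReal (μ := stdGaussian E) (innerSL ℝ x)
  rw [integral_strongDual_stdGaussian, variance_dual_stdGaussian, innerSL_apply_norm] at hmap
  rw [gaussianReal_map_const_mul]
  convert! hmap using 2
  · simp
  · ext; simp

lemma lintegral_inner_stdGaussian (x : E) {F : ℝ → ENNReal} (hF : Measurable F) :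
    ∫⁻ z, F (inner ℝ x z) ∂stdGaussian E = ∫⁻ h, F (‖x‖ * h) ∂gaussianReal 0 1 := by
  rw [← lintegral_map hF (by fun_prop), map_inner_stdGaussian, lintegral_map hF (by fun_prop)]

lemma lintegral_exp_inner_stdGaussian (x : E) (t : ℝ) :
    ∫⁻ z, ofReal (exp (t * inner ℝ x z)) ∂stdGaussian E = ofReal (exp (t ^ 2 * ‖x‖ ^ 2 / 2)) := by
  rw [lintegral_inner_stdGaussian x (F := fun y => ofReal (exp (t * y))) (by fun_prop)]
  simp_rw [← mul_assoc]
  rw [← ofReal_integral_eq_lintegral_ofReal (integrable_exp_mul_gaussianReal _)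
    (Filter.Eventually.of_forall fun x => by positivity), integral_exp_mul_gaussianReal, mul_pow]

lemma lintegral_exp_sq_inner_stdGaussian_le {x : E} (hx : ‖x‖ ≤ 1) :
    ∫⁻ z, ofReal (exp (3 / 8 * inner ℝ x z ^ 2)) ∂stdGaussian E ≤ ofReal 2 := by
  rw [lintegral_inner_stdGaussian x (F := fun y => ofReal (exp (3 / 8 * y ^ 2))) (by fun_prop)]
  calc ∫⁻ y, ofReal (exp (3 / 8 * (‖x‖ * y) ^ 2)) ∂gaussianReal 0 1
      ≤ ∫⁻ y, ofReal (exp (3 / 8 * y ^ 2)) ∂gaussianReal 0 1 := by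
        refine lintegral_mono fun y => ENNReal.ofReal_le_ofReal (Real.exp_le_exp.2 ?_)
        rw [mul_pow]
        gcongr
        exact mul_le_of_le_one_left (sq_nonneg y) (pow_le_one₀ (norm_nonneg x) hx)
    _ = ofReal √(2 ^ 2) := by
        rw [lintegral_exp_mul_sq_gaussianReal (by norm_num)]
        norm_num
    _ = ofReal 2 := by rw [Real.sqrt_sq zero_le_two]

lemma lintegral_exp_mul_excess_le {s : ℝ} (hs : |s| ≤ 1 / 4) :
    ∫⁻ z, ofReal (exp (s * excess z)) ∂stdGaussian E
      ≤ ofReal (exp (2 * s ^ 2 * Module.finrank ℝ E)) := by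
  have hprod (y : Fin (Module.finrank ℝ E) → ℝ) :
      ofReal (exp (s * excess (∑ i, y i • stdOrthonormalBasis ℝ E i)))
        = ∏ i, ofReal (exp (s * (y i ^ 2 - 1))) := by
    rw [excess_sum_smul, Finset.mul_sum, Real.exp_sum,
      ENNReal.ofReal_prod_of_nonneg fun i _ => by positivity]
  rw [stdGaussian_eq_map_pi_orthonormalBasis (stdOrthonormalBasis ℝ E),
    lintegral_map (by fun_prop) (by fun_prop)]
  simp_rw [hprod]
  rw [lintegral_pi_prod (fun _ => gaussianReal 0 1) (fun _ y => ofReal (exp (s * (y ^ 2 - 1))))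
    fun _ => by fun_prop]
  refine (Finset.prod_le_prod' fun i _ => lintegral_exp_mul_sq_sub_one_le hs).trans_eq ?_
  rw [Finset.prod_const, ← ENNReal.ofReal_pow (by positivity), ← Real.exp_nat_mul,
    Finset.card_univ, Fintype.card_fin, mul_comm]

lemma integrable_inner_sq (x : E) : Integrable (fun z => inner ℝ x z ^ 2) (stdGaussian E) := by
  refine (integrable_map_measure (f := fun z : E => (inner ℝ x z : ℝ)) (g := fun y => y ^ 2)
    (by fun_prop) (by fun_prop)).1 ?_
  rw [map_inner_stdGaussian, integrable_map_measure (by fun_prop) (by fun_prop)]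
  simpa only [Function.comp_def, mul_pow] using (integrable_pow_gaussianReal 2).const_mul _

lemma integral_inner_sq (x : E) : ∫ z, inner ℝ x z ^ 2 ∂stdGaussian E = ‖x‖ ^ 2 := by
  rw [← integral_map (φ := fun z : E => (inner ℝ x z : ℝ)) (f := fun y => y ^ 2) (by fun_prop)
    (by fun_prop), map_inner_stdGaussian, integral_map (by fun_prop) (by fun_prop)]
  simp_rw [mul_pow]
  rw [integral_const_mul, integral_sq_gaussianReal, mul_one]

omit [MeasurableSpace E] [BorelSpace E] in
lemma exists_orthonormalBasis_eq_norm_smul {x : E} (hx : x ≠ 0) :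
    ∃ (s : Finset E) (b : OrthonormalBasis s ℝ E) (j : s), x = ‖x‖ • b j := by
  have hunit : Orthonormal ℝ ((↑) : ({‖x‖⁻¹ • x} : Set E) → E) := by
    refine ⟨?_, fun i j hij => absurd (Subsingleton.elim i j) hij⟩
    rintro ⟨_, rfl⟩
    exact norm_smul_inv_norm (𝕜 := ℝ) hx
  obtain ⟨s, b, hs, hb⟩ := hunit.exists_orthonormalBasis_extension
  refine ⟨s, b, ⟨‖x‖⁻¹ • x, hs rfl⟩, ?_⟩
  rw [hb, smul_inv_smul₀ (norm_ne_zero_iff.2 hx)]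

lemma integrable_and_integral_excess_mul_inner_sq (x : E) :
    Integrable (fun z => excess z * inner ℝ x z ^ 2) (stdGaussian E) ∧
      ∫ z, excess z * inner ℝ x z ^ 2 ∂stdGaussian E = 2 * ‖x‖ ^ 2 := by
  classical
  rcases eq_or_ne x 0 with rfl | hx
  · simp
  obtain ⟨s, b, j, hb⟩ := exists_orthonormalBasis_eq_norm_smul hx
  have hcoord (y : s → ℝ) : excess (∑ i, y i • b i) * inner ℝ x (∑ i, y i • b i) ^ 2
      = ‖x‖ ^ 2 * ∑ i, (y i ^ 2 - 1) * y j ^ 2 := by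
    conv_lhs => rw [hb]
    rw [excess_sum_smul, inner_smul_left, b.orthonormal.inner_right_fintype, ← Finset.sum_mul,
      RCLike.conj_to_real]
    ring
  have hcont : Continuous fun z : E => excess z * inner ℝ x z ^ 2 := by fun_prop
  have hmeas : Measurable fun y : s → ℝ => ∑ i, y i • b i := by fun_prop
  rw [stdGaussian_eq_map_pi_orthonormalBasis b,
    integrable_map_measure hcont.aestronglyMeasurable hmeas.aemeasurable,
    integral_map hmeas.aemeasurable hcont.aestronglyMeasurable]
  simp_rw [Function.comp_def, hcoord]
  refine ⟨(integrable_finsetSum _ fun i _ =>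
    (integrable_and_integral_centered_sq_mul_sq i j).1).const_mul _, ?_⟩
  rw [integral_const_mul, integral_finsetSum _ fun i _ =>
    (integrable_and_integral_centered_sq_mul_sq i j).1]
  simp_rw [(integrable_and_integral_centered_sq_mul_sq _ j).2]
  simp [mul_comm]

end StdGaussianMoments

/-! ### Concentration -/

section TruncatedExponentialMoments

lemma exp_le_one_add_add_sq_mul_exp_max (y : ℝ) :
    exp y ≤ 1 + y + y ^ 2 * exp (max y 0) := by
  have hle : exp y * (1 - y) ≤ 1 := by
    calc exp y * (1 - y) ≤ exp y * exp (-y) := by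
          gcongr
          exact Real.one_sub_le_exp_neg y
      _ = 1 := by rw [← Real.exp_add, add_neg_cancel, Real.exp_zero]
  rcases le_total y 0 with hy | hy
  · rw [max_eq_right hy, Real.exp_zero]
    nlinarith [Real.add_one_le_exp y]
  · rw [max_eq_left hy]
    nlinarith [mul_le_mul_of_nonneg_left hle hy, Real.add_one_le_exp y]

lemma integrable_and_integral_le {Ω : Type*} [MeasurableSpace Ω] {μ : Measure Ω} {f : Ω → ℝ}
    (hf : Measurable f) (hf₀ : ∀ x, 0 ≤ f x) {c : ℝ} (hc : 0 ≤ c)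
    (h : ∫⁻ x, ofReal (f x) ∂μ ≤ ofReal c) : Integrable f μ ∧ ∫ x, f x ∂μ ≤ c := by
  have hint : Integrable f μ := by
    refine ⟨hf.aestronglyMeasurable, ?_⟩
    rw [hasFiniteIntegral_iff_ofReal (.of_forall hf₀)]
    exact h.trans_lt ENNReal.ofReal_lt_top
  rw [← ofReal_integral_eq_lintegral_ofReal hint (.of_forall hf₀)] at h
  exact ⟨hint, (ENNReal.ofReal_le_ofReal_iff hc).1 h⟩

lemma pow_four_le_exp_add_exp_neg {n : ℝ} (hn : 0 < n) (τ : ℝ) :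
    τ ^ 4 ≤ 6144 * n ^ 2 * (exp (1 / (4 * √n) * τ) + exp (-(1 / (4 * √n)) * τ)) := by
  have hsq : √n ^ 2 = n := Real.sq_sqrt hn.le
  have := Real.sqrt_pos.2 hn
  set w := 1 / (4 * √n) * τ with hw
  have hτ : τ ^ 4 = 256 * n ^ 2 * |w| ^ 4 := by
    rw [pow_abs, abs_of_nonneg (by positivity), ← hsq, hw]
    field_simp
    norm_num
  have hexp := Real.pow_div_factorial_le_exp |w| (abs_nonneg w) 4
  rw [show (Nat.factorial 4 : ℝ) = 24 by norm_num [Nat.factorial]] at hexp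
  rw [neg_mul, ← hw, hτ]
  nlinarith [mul_le_mul_of_nonneg_left (hexp.trans (Real.exp_abs_le w)) (sq_nonneg n)]

lemma sq_mul_pow_four_mul_exp_le {n : ℝ} (hn : 0 < n) (α τ g : ℝ) :
    (α + τ) ^ 2 * g ^ 4 * exp (g ^ 2 / 8)
      ≤ (256 * α ^ 2 + 98304 * n) * exp (3 / 8 * g ^ 2) + τ ^ 4 / n := by
  set e := exp (g ^ 2 / 8) with he
  have he₁ : 1 ≤ e := Real.one_le_exp (by positivity)
  have he₃ : exp (3 / 8 * g ^ 2) = e ^ 3 := by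
    rw [he, ← Real.exp_nat_mul]
    congr 1
    push_cast
    ring
  have hfour : g ^ 4 * e ≤ 128 * e ^ 3 := by
    have hpow := Real.pow_div_factorial_le_exp (g ^ 2 / 8) (by positivity) 2
    norm_num [Nat.factorial] at hpow
    calc g ^ 4 * e ≤ (128 * e) * e := by gcongr; linarith
      _ ≤ 128 * e ^ 3 := by nlinarith [sq_nonneg e]
  have height : g ^ 8 * e ^ 2 ≤ 98304 * e ^ 3 := by
    have hpow := Real.pow_div_factorial_le_exp (g ^ 2 / 8) (by positivity) 4
    norm_num [Nat.factorial] at hpow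
    calc g ^ 8 * e ^ 2 ≤ (98304 * e) * e ^ 2 := by gcongr; linarith
      _ = 98304 * e ^ 3 := by ring
  have hyoung : 2 * τ ^ 2 * g ^ 4 * e ≤ τ ^ 4 / n + n * (g ^ 8 * e ^ 2) := by
    have hsquare : 0 ≤ (τ ^ 2 - n * g ^ 4 * e) ^ 2 / n := by positivity
    have hexpand : (τ ^ 2 - n * g ^ 4 * e) ^ 2 / n
        = τ ^ 4 / n + n * (g ^ 8 * e ^ 2) - 2 * τ ^ 2 * g ^ 4 * e := by
      field_simp
      ring
    linarith
  have hcross : 0 ≤ (α - τ) ^ 2 * (g ^ 4 * e) := by positivity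
  rw [he₃]
  nlinarith [mul_le_mul_of_nonneg_left height hn.le,
    mul_le_mul_of_nonneg_left hfour (sq_nonneg α)]

variable {E : Type*} [NormedAddCommGroup E] [InnerProductSpace ℝ E] [FiniteDimensional ℝ E]
  [MeasurableSpace E] [BorelSpace E]

lemma integrable_and_integral_exp_excess_le_two {n s : ℝ} (hn : 1 ≤ n)
    (hE : (Module.finrank ℝ E : ℝ) ≤ n) (hs : s ^ 2 * (16 * n) = 1) :
    Integrable (fun z => exp (s * excess z)) (stdGaussian E) ∧
      ∫ z, exp (s * excess z) ∂stdGaussian E ≤ 2 := by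
  have hs₄ : |s| ≤ 1 / 4 := abs_le_of_sq_le_sq (by nlinarith) (by norm_num)
  refine integrable_and_integral_le (by fun_prop) (fun _ => by positivity) (by norm_num)
    ((lintegral_exp_mul_excess_le hs₄).trans (ENNReal.ofReal_le_ofReal ?_))
  have hexp := Real.exp_bound_div_one_sub_of_interval' (x := 1 / 2) (by norm_num) (by norm_num)
  calc exp (2 * s ^ 2 * Module.finrank ℝ E) ≤ exp (1 / 2) := by
        gcongr
        nlinarith [mul_le_mul_of_nonneg_left hE (sq_nonneg s)]
    _ ≤ 2 := by linarith

lemma integrable_and_integral_excess_pow_four_le {n : ℝ} (hn : 1 ≤ n)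
    (hE : (Module.finrank ℝ E : ℝ) ≤ n) :
    Integrable (fun z => excess z ^ 4) (stdGaussian E) ∧
      ∫ z, excess z ^ 4 ∂stdGaussian E ≤ 24576 * n ^ 2 := by
  have hn₀ : 0 < n := by linarith
  have hscale : (1 / (4 * √n)) ^ 2 * (16 * n) = 1 := by
    rw [div_pow, mul_pow, Real.sq_sqrt hn₀.le]
    field_simp
    norm_num
  obtain ⟨hint₁, hle₁⟩ := integrable_and_integral_exp_excess_le_two (E := E) hn hE hscale
  obtain ⟨hint₂, hle₂⟩ := integrable_and_integral_exp_excess_le_two (E := E) hn hE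
    ((congrArg (· * (16 * n)) (neg_sq (1 / (4 * √n)))).trans hscale)
  have hint := (hint₁.add hint₂).const_mul (6144 * n ^ 2)
  have hle (z : E) := pow_four_le_exp_add_exp_neg hn₀ (excess z)
  have hint₄ : Integrable (fun z => excess z ^ 4) (stdGaussian E) :=
    hint.mono' (by fun_prop) (.of_forall fun z => by
      rw [Real.norm_of_nonneg (by positivity)]
      exact hle z)
  refine ⟨hint₄, (integral_mono hint₄ hint hle).trans ?_⟩
  simp only [Pi.add_apply]
  rw [integral_const_mul, integral_add hint₁ hint₂]
  nlinarith [mul_le_mul_of_nonneg_left (add_le_add hle₁ hle₂) (sq_nonneg n)]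

lemma integrable_and_integral_sq_mul_pow_four_mul_exp_le {n : ℝ} (hn : 1 ≤ n)
    (hE : (Module.finrank ℝ E : ℝ) ≤ n) (α : ℝ) {x : E} (hx : ‖x‖ ≤ 1) :
    Integrable (fun z => (α + excess z) ^ 2 * inner ℝ x z ^ 4 * exp (inner ℝ x z ^ 2 / 8))
      (stdGaussian E) ∧
    ∫ z, (α + excess z) ^ 2 * inner ℝ x z ^ 4 * exp (inner ℝ x z ^ 2 / 8) ∂stdGaussian E
      ≤ 300000 * (α ^ 2 + n) := by
  have hn₀ : 0 < n := by linarith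
  obtain ⟨hint₁, hle₁⟩ := integrable_and_integral_le (μ := stdGaussian E)
    (f := fun z => exp (3 / 8 * inner ℝ x z ^ 2)) (by fun_prop) (fun _ => by positivity)
    zero_le_two (lintegral_exp_sq_inner_stdGaussian_le hx)
  obtain ⟨hint₂, hle₂⟩ := integrable_and_integral_excess_pow_four_le (E := E) hn hE
  have hint := (hint₁.const_mul (256 * α ^ 2 + 98304 * n)).add (hint₂.div_const n)
  have hle (z : E) := sq_mul_pow_four_mul_exp_le hn₀ α (excess z) (inner ℝ x z)
  have hint' : Integrable (fun z : E =>
      (α + excess z) ^ 2 * inner ℝ x z ^ 4 * exp (inner ℝ x z ^ 2 / 8)) (stdGaussian E) :=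
    hint.mono' (by fun_prop) (.of_forall fun z => by
      rw [Real.norm_of_nonneg (by positivity)]
      exact hle z)
  refine ⟨hint', (integral_mono hint' hint hle).trans ?_⟩
  simp only [Pi.add_apply]
  rw [integral_add (hint₁.const_mul _) (hint₂.div_const n), integral_const_mul, integral_div]
  have hquartic : (∫ z, excess z ^ 4 ∂stdGaussian E) / n ≤ 24576 * n := by
    rw [div_le_iff₀ hn₀]
    linarith
  have hquadratic := mul_le_mul_of_nonneg_left hle₁
    (show 0 ≤ 256 * α ^ 2 + 98304 * n by positivity)
  nlinarith [sq_nonneg α]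

lemma indicator_exp_mul_sq_le (w g : ℝ) :
    {w : ℝ | w ≤ 1 / 8}.indicator (fun w => exp (w * g ^ 2)) w
      ≤ 1 + w * g ^ 2 + w ^ 2 * g ^ 4 * exp (g ^ 2 / 8) := by
  by_cases hw : w ≤ 1 / 8
  · rw [Set.indicator_of_mem (by exact hw)]
    have hmax : max (w * g ^ 2) 0 ≤ g ^ 2 / 8 :=
      max_le (by nlinarith [mul_le_mul_of_nonneg_right hw (sq_nonneg g)]) (by positivity)
    calc exp (w * g ^ 2) ≤ 1 + w * g ^ 2 + (w * g ^ 2) ^ 2 * exp (max (w * g ^ 2) 0) :=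
          exp_le_one_add_add_sq_mul_exp_max _
      _ ≤ 1 + w * g ^ 2 + (w * g ^ 2) ^ 2 * exp (g ^ 2 / 8) := by gcongr
      _ = _ := by ring
  · rw [Set.indicator_of_notMem (by exact hw)]
    have hw₀ : 0 ≤ w := by linarith
    positivity

lemma integrable_and_integral_add_excess_mul_inner_sq (α : ℝ) (x : E) :
    Integrable (fun z => (α + excess z) * inner ℝ x z ^ 2) (stdGaussian E) ∧
      ∫ z, (α + excess z) * inner ℝ x z ^ 2 ∂stdGaussian E = ‖x‖ ^ 2 * (α + 2) := by
  obtain ⟨hint, heq⟩ := integrable_and_integral_excess_mul_inner_sq x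
  have hint' := (integrable_inner_sq x).const_mul α
  simp_rw [add_mul]
  refine ⟨hint'.add hint, ?_⟩
  rw [integral_add hint' hint, integral_const_mul, integral_inner_sq, heq]
  ring

lemma lintegral_indicator_exp_quadratic_le {n : ℝ} (hn : 1 ≤ n)
    (hE : (Module.finrank ℝ E : ℝ) ≤ n) (s α : ℝ) {x : E} (hx : ‖x‖ ≤ 1) :
    ∫⁻ z, {z : E | s * (α + excess z) ≤ 1 / 8}.indicator
        (fun z => ofReal (exp (s * (α + excess z) * inner ℝ x z ^ 2))) z ∂stdGaussian E
      ≤ ofReal (exp (s * (‖x‖ ^ 2 * (α + 2)) + 300000 * s ^ 2 * (α ^ 2 + n))) := by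
  obtain ⟨hint₁, heq₁⟩ := integrable_and_integral_add_excess_mul_inner_sq α x
  obtain ⟨hint₂, hle₂⟩ := integrable_and_integral_sq_mul_pow_four_mul_exp_le hn hE α hx
  have hlinear : Integrable (fun z => 1 + s * ((α + excess z) * inner ℝ x z ^ 2)) (stdGaussian E) :=
    (integrable_const 1).add (hint₁.const_mul s)
  have hquadratic := hint₂.const_mul (s ^ 2)
  set P : E → ℝ := fun z => 1 + s * ((α + excess z) * inner ℝ x z ^ 2)
    + s ^ 2 * ((α + excess z) ^ 2 * inner ℝ x z ^ 4 * exp (inner ℝ x z ^ 2 / 8)) with hP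
  have hle (z : E) : {z : E | s * (α + excess z) ≤ 1 / 8}.indicator
      (fun z => exp (s * (α + excess z) * inner ℝ x z ^ 2)) z ≤ P z := by
    refine (indicator_exp_mul_sq_le (s * (α + excess z)) (inner ℝ x z)).trans_eq ?_
    simp only [hP]
    ring
  have hP₀ (z : E) : 0 ≤ P z :=
    (Set.indicator_nonneg (fun _ _ => (Real.exp_pos _).le) z).trans (hle z)
  have hPle : ∫ z, P z ∂stdGaussian E
      ≤ s * (‖x‖ ^ 2 * (α + 2)) + 300000 * s ^ 2 * (α ^ 2 + n) + 1 := by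
    simp only [hP]
    rw [integral_add hlinear hquadratic, integral_add (integrable_const 1) (hint₁.const_mul s),
      integral_const_mul, integral_const_mul, heq₁, integral_const, probReal_univ, one_smul]
    linarith [mul_le_mul_of_nonneg_left hle₂ (sq_nonneg s)]
  calc _ ≤ ∫⁻ z, ofReal (P z) ∂stdGaussian E := by
        refine lintegral_mono fun z => ?_
        refine Eq.trans_le ?_ (ENNReal.ofReal_le_ofReal (hle z))
        simp only [Set.indicator_apply, apply_ite ofReal, ENNReal.ofReal_zero]
    _ = ofReal (∫ z, P z ∂stdGaussian E) :=
        (ofReal_integral_eq_lintegral_ofReal (hlinear.add hquadratic) (.of_forall hP₀)).symm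
    _ ≤ _ := ENNReal.ofReal_le_ofReal (hPle.trans (Real.add_one_le_exp _))

lemma exp_mul_add_exp_neg_mul_le {w R : ℝ} (hw : |w| ≤ R) (g : ℝ) :
    exp (w * g) + exp (-(w * g)) ≤ exp (R * g) + exp (-(R * g)) := by
  have hcosh : Real.cosh (w * g) ≤ Real.cosh (R * g) := by
    rw [Real.cosh_le_cosh, abs_mul, abs_mul]
    exact mul_le_mul_of_nonneg_right (hw.trans (le_abs_self R)) (abs_nonneg g)
  rw [Real.cosh_eq, Real.cosh_eq] at hcosh
  linarith

/- Averaging over `z` and `-z` turns the exponential into a hyperbolic cosine, which is monotone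
in the truncated weight. -/
lemma lintegral_indicator_exp_mul_inner_le {W : E → ℝ} (hW : Measurable W)
    (heven : ∀ z, W (-z) = W z) (R : ℝ) (x : E) :
    ∫⁻ z, {z : E | |W z| ≤ R}.indicator (fun z => ofReal (exp (W z * inner ℝ x z))) z
        ∂stdGaussian E ≤ ofReal (exp (R ^ 2 * ‖x‖ ^ 2 / 2)) := by
  set F : E → ENNReal :=
    {z : E | |W z| ≤ R}.indicator (fun z => ofReal (exp (W z * inner ℝ x z))) with hF
  have hFmeas : Measurable F :=
    Measurable.indicator (by fun_prop) (measurableSet_le (by fun_prop) (by fun_prop))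
  have hneg : ∫⁻ z, F (-z) ∂stdGaussian E = ∫⁻ z, F z ∂stdGaussian E := by
    conv_rhs => rw [← stdGaussian_map (LinearIsometryEquiv.neg ℝ (E := E)),
      lintegral_map hFmeas (by fun_prop)]
    simp only [LinearIsometryEquiv.coe_neg]
  have hpoint (z : E) : F z + F (-z)
      ≤ ofReal (exp (R * inner ℝ x z)) + ofReal (exp (-R * inner ℝ x z)) := by
    simp only [hF, Set.indicator_apply, Set.mem_ofPred_eq, heven]
    split_ifs with hz
    · rw [← ENNReal.ofReal_add (by positivity) (by positivity),
        ← ENNReal.ofReal_add (by positivity) (by positivity), inner_neg_right, mul_neg, neg_mul]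
      exact ENNReal.ofReal_le_ofReal (exp_mul_add_exp_neg_mul_le hz _)
    · simp only [add_zero, zero_le]
  have hdouble : 2 * ∫⁻ z, F z ∂stdGaussian E ≤ 2 * ofReal (exp (R ^ 2 * ‖x‖ ^ 2 / 2)) := by
    calc 2 * ∫⁻ z, F z ∂stdGaussian E = ∫⁻ z, (F z + F (-z)) ∂stdGaussian E := by
          rw [lintegral_add_left hFmeas, hneg, two_mul]
      _ ≤ _ := lintegral_mono hpoint
      _ = _ := by
          rw [lintegral_add_left (by fun_prop), lintegral_exp_inner_stdGaussian,
            lintegral_exp_inner_stdGaussian, neg_sq, two_mul]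
  exact (ENNReal.mul_le_mul_iff_right (by simp) (by simp)).1 hdouble

end TruncatedExponentialMoments

section Chernoff

lemma measure_le_of_lintegral_indicator_exp_le {Ω : Type*} [MeasurableSpace Ω] {μ : Measure Ω}
    {f : Ω → ℝ} (hf : Measurable f) {G : Set Ω} (hG : MeasurableSet G) {s a : ℝ} (hs : 0 ≤ s)
    (h : ∫⁻ x, G.indicator (fun x => ofReal (exp (s * f x))) x ∂μ ≤ ofReal (exp a)) (t : ℝ) :
    μ {x | x ∈ G ∧ t ≤ f x} ≤ ofReal (exp (a - s * t)) := by
  have hmarkov := mul_meas_ge_le_lintegral (μ := μ)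
    (Measurable.indicator (f := fun x => ofReal (exp (s * f x))) (by fun_prop) hG)
    (ofReal (exp (s * t)))
  have hsub : {x | x ∈ G ∧ t ≤ f x}
      ⊆ {x | ofReal (exp (s * t)) ≤ G.indicator (fun x => ofReal (exp (s * f x))) x} := by
    rintro x ⟨hxG, hx⟩
    simp only [Set.mem_ofPred_eq, Set.indicator_of_mem hxG]
    gcongr
  rw [Real.exp_sub, ENNReal.ofReal_div_of_pos (by positivity),
    ENNReal.le_div_iff_mul_le (.inl (by simp [Real.exp_pos])) (by simp), mul_comm]
  exact (mul_le_mul_right (measure_mono hsub) _).trans (hmarkov.trans h)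

lemma measure_lt_abs_le_of_lintegral_exp_le {Ω : Type*} [MeasurableSpace Ω] {μ : Measure Ω}
    {f : Ω → ℝ} (hf : Measurable f) {s a : ℝ} (hs : 0 ≤ s)
    (hpos : ∫⁻ x, ofReal (exp (s * f x)) ∂μ ≤ ofReal (exp a))
    (hneg : ∫⁻ x, ofReal (exp (-s * f x)) ∂μ ≤ ofReal (exp a)) (t : ℝ) :
    μ {x | t < |f x|} ≤ ofReal (2 * exp (a - s * t)) := by
  have hupper := measure_le_of_lintegral_indicator_exp_le hf .univ hs
    (by simpa only [Set.indicator_univ]) t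
  have hlower := measure_le_of_lintegral_indicator_exp_le hf.neg .univ hs
    (by simpa only [Set.indicator_univ, Pi.neg_apply, mul_neg, neg_mul] using hneg) t
  calc μ {x | t < |f x|}
      ≤ μ ({x | x ∈ Set.univ ∧ t ≤ f x} ∪ {x | x ∈ Set.univ ∧ t ≤ (-f) x}) :=
        measure_mono fun x hx => (lt_abs.1 hx).imp (⟨trivial, ·.le⟩) (⟨trivial, ·.le⟩)
    _ ≤ ofReal (exp (a - s * t)) + ofReal (exp (a - s * t)) :=
        (measure_union_le _ _).trans (add_le_add hupper hlower)
    _ = _ := by rw [← ENNReal.ofReal_add (by positivity) (by positivity), two_mul]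

variable {ι : Type*} [Fintype ι] {X : ι → Type*} [∀ i, MeasurableSpace (X i)]
  {μ : ∀ i, Measure (X i)} [∀ i, IsProbabilityMeasure (μ i)] {f : ∀ i, X i → ℝ}

lemma lintegral_pi_indicator_exp_sum_le (hf : ∀ i, Measurable (f i)) {G : ∀ i, Set (X i)}
    (hG : ∀ i, MeasurableSet (G i)) {a : ι → ℝ}
    (h : ∀ i, ∫⁻ y, (G i).indicator (fun y => ofReal (exp (f i y))) y ∂μ i
      ≤ ofReal (exp (a i))) :
    ∫⁻ x, (Set.univ.pi G).indicator (fun x => ofReal (exp (∑ i, f i (x i)))) x ∂Measure.pi μ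
      ≤ ofReal (exp (∑ i, a i)) := by
  have hprod (x : ∀ i, X i) :
      (Set.univ.pi G).indicator (fun x => ofReal (exp (∑ i, f i (x i)))) x
        = ∏ i, (G i).indicator (fun y => ofReal (exp (f i y))) (x i) := by
    by_cases hx : x ∈ Set.univ.pi G
    · simp only [Set.indicator_of_mem hx, Set.indicator_of_mem (Set.mem_univ_pi.1 hx _),
        Real.exp_sum, ENNReal.ofReal_prod_of_nonneg fun i _ => (Real.exp_pos (f i (x i))).le]
    · obtain ⟨i, hi⟩ := not_forall.1 (mt Set.mem_univ_pi.2 hx)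
      rw [Set.indicator_of_notMem hx,
        Finset.prod_eq_zero (Finset.mem_univ i) (Set.indicator_of_notMem hi _)]
  simp_rw [hprod]
  rw [lintegral_pi_prod μ _ fun i => Measurable.indicator (by have := hf i; fun_prop) (hG i),
    Real.exp_sum, ENNReal.ofReal_prod_of_nonneg fun i _ => by positivity]
  exact Finset.prod_le_prod' fun i _ => h i

lemma measure_pi_le_sum_le (hf : ∀ i, Measurable (f i)) {G : ∀ i, Set (X i)}
    (hG : ∀ i, MeasurableSet (G i)) {a : ι → ℝ} {s : ℝ} (hs : 0 ≤ s)
    (h : ∀ i, ∫⁻ y, (G i).indicator (fun y => ofReal (exp (s * f i y))) y ∂μ i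
      ≤ ofReal (exp (a i))) (t : ℝ) :
    Measure.pi μ {x | (∀ i, x i ∈ G i) ∧ t ≤ ∑ i, f i (x i)}
      ≤ ofReal (exp (∑ i, a i - s * t)) := by
  simp_rw [← Set.mem_univ_pi]
  refine measure_le_of_lintegral_indicator_exp_le (by fun_prop) (.univ_pi hG) hs ?_ t
  simp_rw [Finset.mul_sum]
  exact lintegral_pi_indicator_exp_sum_le (fun i => (hf i).const_mul s) hG h

lemma measure_pi_lt_abs_sum_le (hf : ∀ i, Measurable (f i)) {a : ι → ℝ} {s : ℝ} (hs : 0 ≤ s)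
    (hpos : ∀ i, ∫⁻ y, ofReal (exp (s * f i y)) ∂μ i ≤ ofReal (exp (a i)))
    (hneg : ∀ i, ∫⁻ y, ofReal (exp (-s * f i y)) ∂μ i ≤ ofReal (exp (a i))) (t : ℝ) :
    Measure.pi μ {x | t < |∑ i, f i (x i)|} ≤ ofReal (2 * exp (∑ i, a i - s * t)) := by
  have hsum {r : ℝ} (hr : ∀ i, ∫⁻ y, ofReal (exp (r * f i y)) ∂μ i ≤ ofReal (exp (a i))) :
      ∫⁻ x, ofReal (exp (r * ∑ i, f i (x i))) ∂Measure.pi μ ≤ ofReal (exp (∑ i, a i)) := by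
    simpa only [Set.pi_univ, Set.indicator_univ, ← Finset.mul_sum] using
      lintegral_pi_indicator_exp_sum_le (fun i => (hf i).const_mul r) (fun _ => .univ)
        (by simpa only [Set.indicator_univ] using hr)
  exact measure_lt_abs_le_of_lintegral_exp_le (by fun_prop) hs (hsum hpos) (hsum hneg) t

lemma measure_pi_exists_mem_le {S : ∀ i, Set (X i)} (hS : ∀ i, MeasurableSet (S i))
    {p : ENNReal} (h : ∀ i, μ i (S i) ≤ p) :
    Measure.pi μ {x | ∃ i, x i ∈ S i} ≤ Fintype.card ι * p := by
  have hunion : {x : ∀ i, X i | ∃ i, x i ∈ S i} = ⋃ i, Function.eval i ⁻¹' S i := by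
    ext x
    simp
  rw [hunion]
  calc _ ≤ ∑ i, Measure.pi μ (Function.eval i ⁻¹' S i) := measure_iUnion_fintype_le _ _
    _ ≤ ∑ _i : ι, p := Finset.sum_le_sum fun i _ => by
        rw [(measurePreserving_eval μ i).measure_preimage (hS i).nullMeasurableSet]
        exact h i
    _ = _ := by rw [Finset.sum_const, Finset.card_univ, nsmul_eq_mul]

end Chernoff

section GaussianTails

variable {E : Type*} [NormedAddCommGroup E] [InnerProductSpace ℝ E] [FiniteDimensional ℝ E]
  [MeasurableSpace E] [BorelSpace E]

lemma stdGaussian_lt_abs_inner_le {t : ℝ} (ht : 0 ≤ t) (x : E) :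
    stdGaussian E {z | t * ‖x‖ < |inner ℝ z x|} ≤ ofReal (2 * exp (-(t ^ 2 / 2))) := by
  rcases eq_or_ne x 0 with rfl | hx
  · simp
  simp_rw [real_inner_comm x]
  refine (measure_lt_abs_le_of_lintegral_exp_le (s := t / ‖x‖) (by fun_prop) (by positivity)
    (lintegral_exp_inner_stdGaussian x _).le ?_ _).trans_eq ?_
  · rw [lintegral_exp_inner_stdGaussian, neg_sq]
  · congr 3
    field_simp [norm_ne_zero_iff.2 hx]
    ring

lemma stdGaussian_lt_abs_excess_le {s : ℝ} (hs : 0 ≤ s) (hs' : s ≤ 1 / 4) (t : ℝ) :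
    stdGaussian E {z | t < |excess z|}
      ≤ ofReal (2 * exp (2 * s ^ 2 * Module.finrank ℝ E - s * t)) := by
  have hs'' : |s| ≤ 1 / 4 := by rwa [abs_of_nonneg hs]
  refine measure_lt_abs_le_of_lintegral_exp_le measurable_excess hs
    (lintegral_exp_mul_excess_le hs'') ?_ t
  rw [← neg_sq s]
  exact lintegral_exp_mul_excess_le (by rwa [abs_neg])

variable {ι : Type*} [Fintype ι]

lemma measure_pi_lt_abs_sum_mul_excess_le {s : ℝ} (hs : 0 ≤ s) {a : ι → ℝ}
    (ha : ∀ i, |s * a i| ≤ 1 / 4) (t : ℝ) :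
    Measure.pi (fun _ : ι => stdGaussian E) {z | t < |∑ i, a i * excess (z i)|}
      ≤ ofReal (2 * exp (2 * s ^ 2 * Module.finrank ℝ E * ∑ i, a i ^ 2 - s * t)) := by
  have hmgf {r : ℝ} (hr : r ^ 2 = s ^ 2) (hra : ∀ i, |r * a i| ≤ 1 / 4) (i : ι) :
      ∫⁻ z : E, ofReal (exp (r * (a i * excess z))) ∂stdGaussian E
        ≤ ofReal (exp (2 * s ^ 2 * Module.finrank ℝ E * a i ^ 2)) := by
    simp_rw [← mul_assoc r]
    refine (lintegral_exp_mul_excess_le (hra i)).trans_eq ?_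
    rw [mul_pow, hr]
    ring_nf
  rw [Finset.mul_sum]
  exact measure_pi_lt_abs_sum_le (fun i => measurable_excess.const_mul (a i)) hs (hmgf rfl ha)
    (hmgf (neg_sq s) (by simpa only [neg_mul, abs_neg] using ha)) t

lemma measure_pi_quadratic_le {n s : ℝ} (hn : 1 ≤ n) (hE : (Module.finrank ℝ E : ℝ) ≤ n)
    {p : E} (hp : ‖p‖ ≤ 1) (a : ι → ℝ) (t : ℝ) :
    Measure.pi (fun _ : ι => stdGaussian E) {z | (∀ i, s * (a i + excess (z i)) ≤ 1 / 8) ∧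
        t ≤ s * (∑ i, (a i + excess (z i)) * inner ℝ p (z i) ^ 2
          - ‖p‖ ^ 2 * ∑ i, (a i + 2))}
      ≤ ofReal (exp (300000 * s ^ 2 * ∑ i, (a i ^ 2 + n) - t)) := by
  have := measurable_excess (E := E)
  have hChernoff := measure_pi_le_sum_le (μ := fun _ : ι => stdGaussian E)
    (f := fun i z => s * ((a i + excess z) * inner ℝ p z ^ 2))
    (G := fun i => {z | s * (a i + excess z) ≤ 1 / 8}) (fun i => by fun_prop)
    (fun i => measurableSet_le (by fun_prop) (by fun_prop)) zero_le_one
    (fun i => by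
      simp only [one_mul, ← mul_assoc]
      exact lintegral_indicator_exp_quadratic_le hn hE s (a i) hp)
    (t + s * (‖p‖ ^ 2 * ∑ i, (a i + 2)))
  refine le_trans (measure_mono ?_) (hChernoff.trans_eq ?_)
  · rintro z ⟨hz, hzt⟩
    refine ⟨hz, ?_⟩
    rw [← Finset.mul_sum]
    linarith
  · rw [Finset.sum_add_distrib, ← Finset.mul_sum, ← Finset.mul_sum, ← Finset.mul_sum]
    congr 2
    ring

lemma measure_pi_linear_le {s R : ℝ} (hs : 0 ≤ s) {p : E} (hp : ‖p‖ ≤ 1) (q : ι → ℝ) (t : ℝ) :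
    Measure.pi (fun _ : ι => stdGaussian E) {z | (∀ i, |q i ^ 2 + excess (z i)| ≤ R) ∧
        t ≤ ∑ i, (q i ^ 2 + excess (z i)) * q i * inner ℝ p (z i)}
      ≤ ofReal (exp (s ^ 2 * R ^ 2 / 2 * ∑ i, q i ^ 2 - s * t)) := by
  have := measurable_excess (E := E)
  have hmgf (i : ι) :
      ∫⁻ z : E, {z : E | |s * ((q i ^ 2 + excess z) * q i)| ≤ |s * q i| * R}.indicator
        (fun z => ofReal (exp (s * ((q i ^ 2 + excess z) * q i * inner ℝ p z)))) z ∂stdGaussian E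
      ≤ ofReal (exp (s ^ 2 * R ^ 2 / 2 * q i ^ 2)) := by
    simp only [← mul_assoc s]
    refine (lintegral_indicator_exp_mul_inner_le (by fun_prop)
      (fun z => by rw [excess_neg]) _ p).trans (ENNReal.ofReal_le_ofReal (Real.exp_le_exp.2 ?_))
    calc (|s * q i| * R) ^ 2 * ‖p‖ ^ 2 / 2 ≤ (|s * q i| * R) ^ 2 * 1 ^ 2 / 2 := by gcongr
      _ = s ^ 2 * R ^ 2 / 2 * q i ^ 2 := by rw [mul_pow, sq_abs]; ring
  rw [Finset.mul_sum]
  refine le_trans (measure_mono ?_)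
    (measure_pi_le_sum_le (f := fun i z => (q i ^ 2 + excess z) * q i * inner ℝ p z)
      (fun i => by fun_prop) (fun i => measurableSet_le (by fun_prop) (by fun_prop)) hs hmgf t)
  rintro z ⟨hz, hzt⟩
  refine ⟨fun i => ?_, hzt⟩
  have := mul_le_mul_of_nonneg_left (hz i) (abs_nonneg (s * q i))
  rwa [← abs_mul, mul_assoc, mul_comm (q i)] at this

end GaussianTails

/-! ### Nets and polarization -/

section Nets

variable {E : Type*} [NormedAddCommGroup E] {P : Finset E}

lemma exists_norm_sub_le_of_isCover
    (hP : Metric.IsCover 2⁻¹ (Metric.closedBall 0 1) (P : Set E)) {x : E} (hx : ‖x‖ ≤ 1) :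
    ∃ p ∈ P, ‖x - p‖ ≤ 1 / 2 := by
  obtain ⟨p, hp, hxp⟩ := hP (mem_closedBall_zero_iff.2 hx)
  refine ⟨p, hp, ?_⟩
  rw [← dist_eq_norm, one_div]
  exact (edist_le_coe (c := 2⁻¹)).1 hxp

section NormedSpace

variable [NormedSpace ℝ E]

lemma packingNumber_closedBall_le [FiniteDimensional ℝ E] :
    Metric.packingNumber 2⁻¹ (Metric.closedBall (0 : E) 1)
      ≤ (5 ^ Module.finrank ℝ E : ℕ) := by
  classical
  refine iSup₂_le fun C hC => iSup_le fun hsep => ?_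
  by_contra! hlarge
  obtain ⟨S, hSC, hS⟩ := Set.exists_subset_encard_eq (Order.add_one_le_of_lt hlarge)
  lift S to Finset E using Set.finite_of_encard_eq_coe hS
  have hcard : S.card = 5 ^ Module.finrank ℝ E + 1 := by
    rw [Set.encard_coe_eq_coe_finsetCard] at hS
    exact_mod_cast hS
  have hinj : Function.Injective fun x : E => (2 : ℝ) • x := smul_right_injective E two_ne_zero
  have hle := Besicovitch.card_le_of_separated (S.image fun x => (2 : ℝ) • x)
    (by
      simp only [Finset.forall_mem_image, norm_smul, Real.norm_ofNat]
      intro x hx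
      linarith [mem_closedBall_zero_iff.1 (hC (hSC hx))])
    (by
      simp only [Finset.forall_mem_image, ← smul_sub, norm_smul, Real.norm_ofNat]
      intro x hx y hy hxy
      have hdist : ((2⁻¹ : NNReal) : ENNReal) < edist x y :=
        hsep (hSC hx) (hSC hy) (ne_of_apply_ne _ hxy)
      rw [edist_nndist, ENNReal.coe_lt_coe, ← NNReal.coe_lt_coe, coe_nndist, dist_eq_norm] at hdist
      norm_num at hdist
      linarith)
  rw [Finset.card_image_of_injective _ hinj] at hle
  omega

variable (E) in
lemma exists_finset_isCover_closedBall [FiniteDimensional ℝ E] :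
    ∃ P : Finset E, P.card ≤ 5 ^ Module.finrank ℝ E ∧ (∀ p ∈ P, ‖p‖ ≤ 1) ∧
      Metric.IsCover 2⁻¹ (Metric.closedBall 0 1) (P : Set E) := by
  have hle := (Metric.coveringNumber_le_packingNumber 2⁻¹ _).trans
    (packingNumber_closedBall_le (E := E))
  obtain ⟨C, hC, hfin, hcover, hcard⟩ :=
    Metric.exists_set_encard_eq_coveringNumber (ne_top_of_le_ne_top (ENat.natCast_ne_top _) hle)
  lift C to Finset E using hfin
  rw [← hcard, Set.encard_coe_eq_coe_finsetCard] at hle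
  exact ⟨C, by exact_mod_cast hle, fun p hp => mem_closedBall_zero_iff.1 (hC hp), hcover⟩

lemma opNorm_le_of_isCover (hP : Metric.IsCover 2⁻¹ (Metric.closedBall 0 1) (P : Set E))
    {A : E →L[ℝ] E} {m : ℝ} (hm : 0 ≤ m) (h : ∀ p ∈ P, ‖A p‖ ≤ m) : ‖A‖ ≤ 2 * m := by
  have hself : ‖A‖ ≤ m + ‖A‖ * (1 / 2) := by
    refine A.opNorm_le_of_unit_norm (by positivity) fun x hx => ?_
    obtain ⟨p, hp, hxp⟩ := exists_norm_sub_le_of_isCover hP hx.le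
    calc ‖A x‖ = ‖A p + A (x - p)‖ := by rw [← map_add, add_sub_cancel]
      _ ≤ ‖A p‖ + ‖A (x - p)‖ := norm_add_le _ _
      _ ≤ m + ‖A‖ * (1 / 2) := add_le_add (h p hp) (A.le_opNorm_of_le hxp)
  linarith

end NormedSpace

variable [InnerProductSpace ℝ E]

lemma norm_le_of_isCover (hP : Metric.IsCover 2⁻¹ (Metric.closedBall 0 1) (P : Set E)) {r : E}
    {m : ℝ} (h : ∀ p ∈ P, inner ℝ p r ≤ m) : ‖r‖ ≤ 2 * m := by
  obtain ⟨p, hp, hpr⟩ := exists_norm_sub_le_of_isCover hP (x := ‖r‖⁻¹ • r) (by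
    rw [norm_smul, norm_inv, norm_norm]
    exact inv_mul_le_one)
  have hinner : inner ℝ (‖r‖⁻¹ • r) r = ‖r‖ := by
    rw [real_inner_smul_left, real_inner_self_eq_norm_mul_norm, ← mul_assoc]
    exact inv_mul_mul_self ‖r‖
  have hsub : inner ℝ (‖r‖⁻¹ • r - p) r ≤ 1 / 2 * ‖r‖ :=
    (real_inner_le_norm _ _).trans (by gcongr)
  rw [inner_sub_left, hinner] at hsub
  linarith [h p hp]

open scoped Classical in
/-- The vectors `(p ± q) / 2` with `p, q ∈ P`: by polarization, a symmetric bilinear form on `P`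
is controlled by the associated quadratic form on these vectors. -/
noncomputable def polarizationVectors (P : Finset E) : Finset E :=
  Finset.image₂ (fun p q => (2⁻¹ : ℝ) • (p + q)) P P ∪
    Finset.image₂ (fun p q => (2⁻¹ : ℝ) • (p - q)) P P

open scoped Classical in
lemma add_mem_polarizationVectors {p q : E} (hp : p ∈ P) (hq : q ∈ P) :
    (2⁻¹ : ℝ) • (p + q) ∈ polarizationVectors P :=
  Finset.mem_union_left _ (Finset.mem_image₂_of_mem hp hq)

open scoped Classical in
lemma sub_mem_polarizationVectors {p q : E} (hp : p ∈ P) (hq : q ∈ P) :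
    (2⁻¹ : ℝ) • (p - q) ∈ polarizationVectors P :=
  Finset.mem_union_right _ (Finset.mem_image₂_of_mem hp hq)

lemma subset_polarizationVectors : P ⊆ polarizationVectors P := fun p hp => by
  simpa [← two_smul ℝ p, smul_smul] using add_mem_polarizationVectors hp hp

open scoped Classical in
lemma card_polarizationVectors_le : (polarizationVectors P).card ≤ 2 * P.card ^ 2 :=
  calc _ ≤ P.card * P.card + P.card * P.card := (Finset.card_union_le _ _).trans
        (add_le_add (Finset.card_image₂_le _ _ _) (Finset.card_image₂_le _ _ _))
    _ = _ := by ring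

open scoped Classical in
lemma norm_le_of_mem_polarizationVectors {R : ℝ} (hP : ∀ p ∈ P, ‖p‖ ≤ R) {x : E}
    (hx : x ∈ polarizationVectors P) : ‖x‖ ≤ R := by
  rcases Finset.mem_union.1 hx with hx | hx <;>
    obtain ⟨p, hp, q, hq, rfl⟩ := Finset.mem_image₂.1 hx <;>
    rw [norm_smul, Real.norm_of_nonneg (by norm_num)]
  · linarith [norm_add_le p q, hP p hp, hP q hq]
  · linarith [norm_sub_le p q, hP p hp, hP q hq]

lemma inner_apply_le_of_polarizationVectors {A : E →ₗ[ℝ] E} (hA : A.IsSymmetric) {m : ℝ}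
    (h : ∀ x ∈ polarizationVectors P, |inner ℝ x (A x)| ≤ m) {p q : E} (hp : p ∈ P)
    (hq : q ∈ P) : inner ℝ p (A q) ≤ 2 * m := by
  have hadd := (abs_le.1 (h _ (add_mem_polarizationVectors hp hq))).2
  have hsub := (abs_le.1 (h _ (sub_mem_polarizationVectors hp hq))).1
  have hsymm : inner ℝ q (A p) = inner ℝ p (A q) := by rw [← hA q p, real_inner_comm]
  simp only [map_smul, map_add, map_sub, real_inner_smul_left, real_inner_smul_right,
    inner_add_left, inner_add_right, inner_sub_left, inner_sub_right, hsymm] at hadd hsub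
  linarith

lemma norm_apply_le_of_polarizationVectors [FiniteDimensional ℝ E]
    (hP : Metric.IsCover 2⁻¹ (Metric.closedBall 0 1) (P : Set E)) {A : E →ₗ[ℝ] E}
    (hA : A.IsSymmetric) {m : ℝ} (h : ∀ x ∈ polarizationVectors P, |inner ℝ x (A x)| ≤ m)
    (x : E) : ‖A x‖ ≤ 8 * m * ‖x‖ := by
  have hm : 0 ≤ m := by
    obtain ⟨p, hp, -⟩ := exists_norm_sub_le_of_isCover hP (x := 0) (by simp)
    exact (abs_nonneg _).trans (h p (subset_polarizationVectors hp))
  have hnorm (q : E) (hq : q ∈ P) : ‖A q‖ ≤ 2 * (2 * m) :=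
    norm_le_of_isCover hP fun p hp => inner_apply_le_of_polarizationVectors hA h hp hq
  have hop : ‖A.toContinuousLinearMap‖ ≤ 2 * (2 * (2 * m)) :=
    opNorm_le_of_isCover hP (by positivity) hnorm
  exact A.toContinuousLinearMap.le_of_opNorm_le (hop.trans_eq (by ring)) x

end Nets

section LeaveOneOut

lemma measure_pi_le_of_forall_update {ι : Type*} [Fintype ι] [DecidableEq ι] {X : ι → Type*}
    [∀ i, MeasurableSpace (X i)] (μ : ∀ i, Measure (X i)) [∀ i, IsProbabilityMeasure (μ i)]
    {S : Set (∀ i, X i)} (hS : MeasurableSet S) (j : ι) {c : ENNReal}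
    (h : ∀ z, μ j {w | Function.update z j w ∈ S} ≤ c) : Measure.pi μ S ≤ c := by
  rcases isEmpty_or_nonempty (∀ i, X i) with _ | ⟨⟨z₀⟩⟩
  · simp [Set.eq_empty_of_isEmpty S]
  have hfiber : (fun x => ∫⁻ y, S.indicator 1 (Function.update x j y) ∂μ j) ≤ fun _ => c := by
    intro x
    refine Eq.trans_le ?_ (h x)
    have hm : MeasurableSet {w | Function.update x j w ∈ S} := measurable_update x hS
    rw [← lintegral_indicator_one hm]
    rfl
  rw [← lintegral_indicator_one hS, lintegral_eq_lmarginal_univ z₀,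
    lmarginal_erase' _ (measurable_one.indicator hS) (Finset.mem_univ j)]
  refine (lmarginal_mono hfiber z₀).trans ?_
  simp [lmarginal]

variable {E : Type*} [NormedAddCommGroup E] [InnerProductSpace ℝ E] [FiniteDimensional ℝ E]
  [MeasurableSpace E] [BorelSpace E] {ι : Type*} [Fintype ι] [DecidableEq ι]

lemma measure_pi_exists_lt_abs_inner_le {t : ℝ} (ht : 0 ≤ t) (M : ℕ)
    {y : ι → ℕ → (ι → E) → E} (hy : ∀ j m, Continuous (y j m))
    (hupd : ∀ j m z w, y j m (Function.update z j w) = y j m z) :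
    Measure.pi (fun _ : ι => stdGaussian E)
        {z | ∃ j, ∃ m < M, t * ‖y j m z‖ < |inner ℝ (z j) (y j m z)|}
      ≤ Fintype.card ι * (M * ofReal (2 * exp (-(t ^ 2 / 2)))) := by
  have hset : {z : ι → E | ∃ j, ∃ m < M, t * ‖y j m z‖ < |inner ℝ (z j) (y j m z)|}
      = ⋃ j ∈ (Finset.univ : Finset ι), ⋃ m ∈ Finset.range M,
        {z | t * ‖y j m z‖ < |inner ℝ (z j) (y j m z)|} := by
    ext
    simp
  have hsingle (j : ι) (m : ℕ) : Measure.pi (fun _ : ι => stdGaussian E)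
      {z | t * ‖y j m z‖ < |inner ℝ (z j) (y j m z)|} ≤ ofReal (2 * exp (-(t ^ 2 / 2))) := by
    have := hy j m
    refine measure_pi_le_of_forall_update _ (measurableSet_lt
      (Continuous.measurable (by fun_prop)) (Continuous.measurable (by fun_prop))) j fun z => ?_
    simp only [Set.mem_ofPred_eq, hupd, Function.update_self]
    exact stdGaussian_lt_abs_inner_le ht _
  rw [hset]
  calc _ ≤ ∑ _j : ι, ∑ _m ∈ Finset.range M, ofReal (2 * exp (-(t ^ 2 / 2))) :=
        (measure_biUnion_finset_le _ _).trans (Finset.sum_le_sum fun j _ =>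
          (measure_biUnion_finset_le _ _).trans (Finset.sum_le_sum fun m _ => hsingle j m))
    _ = _ := by simp only [Finset.sum_const, Finset.card_univ, Finset.card_range, nsmul_eq_mul]

end LeaveOneOut

/-! ### Entrywise analysis of an eigenvector -/

section Resolvent

/-- The `M`-term Neumann series of `(μ - D)⁻¹ r`. -/
noncomputable def neumannSum {E : Type*} [AddCommGroup E] [Module ℝ E] (D : E →ₗ[ℝ] E) (μ : ℝ)
    (r : E) (M : ℕ) : E :=
  ∑ m ∈ Finset.range M, μ⁻¹ ^ (m + 1) • (D ^ m) r

lemma smul_neumannSum_sub_apply {E : Type*} [AddCommGroup E] [Module ℝ E] (D : E →ₗ[ℝ] E) {μ : ℝ}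
    (hμ : μ ≠ 0) (r : E) (M : ℕ) :
    μ • neumannSum D μ r M - D (neumannSum D μ r M) = r - μ⁻¹ ^ M • (D ^ M) r := by
  unfold neumannSum
  induction M with
  | zero => simp
  | succ M ih =>
    rw [Finset.sum_range_succ, smul_add, map_add, add_sub_add_comm, ih, map_smul, smul_smul,
      pow_succ' μ⁻¹ M, ← mul_assoc, mul_inv_cancel₀ hμ, one_mul, pow_succ' D M,
      Module.End.mul_apply]
    abel

variable {E : Type*} [NormedAddCommGroup E]

lemma norm_pow_apply_le [NormedSpace ℝ E] {D : E →ₗ[ℝ] E} {Δ : ℝ} (hΔ : 0 ≤ Δ)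
    (hD : ∀ x, ‖D x‖ ≤ Δ * ‖x‖) (m : ℕ) (r : E) : ‖(D ^ m) r‖ ≤ Δ ^ m * ‖r‖ := by
  induction m with
  | zero => simp
  | succ m ih =>
    rw [pow_succ', Module.End.mul_apply]
    calc _ ≤ Δ * ‖(D ^ m) r‖ := hD _
      _ ≤ Δ * (Δ ^ m * ‖r‖) := by gcongr
      _ = _ := by ring

lemma norm_le_norm_smul_sub_apply_div [NormedSpace ℝ E] {D : E →ₗ[ℝ] E} {Δ μ : ℝ}
    (hD : ∀ x, ‖D x‖ ≤ Δ * ‖x‖) (hμ : Δ < |μ|) (x : E) :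
    ‖x‖ ≤ ‖μ • x - D x‖ / (|μ| - Δ) := by
  rw [le_div_iff₀ (by linarith)]
  have hsub := norm_sub_norm_le (μ • x) (D x)
  rw [norm_smul, Real.norm_eq_abs] at hsub
  linarith [hD x]

lemma norm_sub_smul_neumannSum_le [NormedSpace ℝ E] {D : E →ₗ[ℝ] E} {Δ μ c : ℝ} {f r u : E}
    (hΔ : 0 ≤ Δ) (hD : ∀ x, ‖D x‖ ≤ Δ * ‖x‖) (hμ : Δ < |μ|) (hu : μ • u - D u = f + c • r)
    (M : ℕ) :
    ‖u - c • neumannSum D μ r M‖ ≤ (‖f‖ + |c| * ((Δ / |μ|) ^ M * ‖r‖)) / (|μ| - Δ) := by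
  have hμ0 : μ ≠ 0 := abs_pos.1 (hΔ.trans_lt hμ)
  set p := neumannSum D μ r M
  have hresolvent : μ • (u - c • p) - D (u - c • p) = f + (c * μ⁻¹ ^ M) • (D ^ M) r :=
    calc _ = (μ • u - D u) - c • (μ • p - D p) := by
          rw [smul_sub, map_sub, map_smul, smul_sub, smul_comm μ c p]
          abel
      _ = _ := by
          rw [hu, smul_neumannSum_sub_apply D hμ0, smul_sub, smul_smul]
          abel
  have hremainder : ‖(c * μ⁻¹ ^ M) • (D ^ M) r‖ ≤ |c| * ((Δ / |μ|) ^ M * ‖r‖) := by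
    rw [norm_smul, Real.norm_eq_abs, abs_mul, abs_pow, abs_inv, div_pow, inv_pow]
    calc _ ≤ |c| * (|μ| ^ M)⁻¹ * (Δ ^ M * ‖r‖) := by
          gcongr
          exact norm_pow_apply_le hΔ hD M r
      _ = _ := by ring
  refine (norm_le_norm_smul_sub_apply_div hD hμ _).trans ?_
  rw [hresolvent]
  have := sub_pos.2 hμ
  gcongr
  exact (norm_add_le _ _).trans (add_le_add_right hremainder _)

variable [InnerProductSpace ℝ E]

lemma abs_inner_neumannSum_le {D : E →ₗ[ℝ] E} {Δ μ t : ℝ} {r z : E} {M : ℕ} (hΔ : 0 ≤ Δ)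
    (hD : ∀ x, ‖D x‖ ≤ Δ * ‖x‖) (hμ : Δ < |μ|) (ht : 0 ≤ t)
    (hK : ∀ m < M, |inner ℝ z ((D ^ m) r)| ≤ t * ‖(D ^ m) r‖) :
    |inner ℝ z (neumannSum D μ r M)| ≤ t * ‖r‖ / (|μ| - Δ) := by
  have hμ0 : 0 < |μ| := hΔ.trans_lt hμ
  have hratio : 0 ≤ Δ / |μ| := by positivity
  have hterm (m : ℕ) (hm : m ∈ Finset.range M) :
      |inner ℝ z (μ⁻¹ ^ (m + 1) • (D ^ m) r)| ≤ t * ‖r‖ * |μ|⁻¹ * (Δ / |μ|) ^ m := by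
    rw [real_inner_smul_right, abs_mul, abs_pow, abs_inv]
    calc _ ≤ |μ|⁻¹ ^ (m + 1) * (t * (Δ ^ m * ‖r‖)) := by
          gcongr
          exact (hK m (Finset.mem_range.1 hm)).trans (by gcongr; exact norm_pow_apply_le hΔ hD m r)
      _ = _ := by
          rw [div_eq_mul_inv, mul_pow, pow_succ]
          ring
  have hgeom : ∑ m ∈ Finset.range M, (Δ / |μ|) ^ m ≤ (1 - Δ / |μ|)⁻¹ := by
    rw [Finset.range_eq_Ico]
    exact (geom_sum_Ico_le_of_lt_one hratio ((div_lt_one hμ0).2 hμ)).trans_eq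
      (by rw [pow_zero, one_div])
  rw [neumannSum, inner_sum]
  calc _ ≤ ∑ m ∈ Finset.range M, t * ‖r‖ * |μ|⁻¹ * (Δ / |μ|) ^ m :=
        (Finset.abs_sum_le_sum_abs _ _).trans (Finset.sum_le_sum hterm)
    _ ≤ t * ‖r‖ * |μ|⁻¹ * (1 - Δ / |μ|)⁻¹ := by
        rw [← Finset.mul_sum]
        gcongr
    _ = t * ‖r‖ / (|μ| - Δ) := by
        rw [mul_assoc, ← mul_inv, mul_sub, mul_one, mul_div_cancel₀ _ hμ0.ne', div_eq_mul_inv]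

lemma abs_inner_le_of_resolvent {D : E →ₗ[ℝ] E} {Δ μ c a t : ℝ} {r z u : E} {M : ℕ}
    (hΔ : 0 ≤ Δ) (hD : ∀ x, ‖D x‖ ≤ Δ * ‖x‖) (hμ : Δ < |μ|) (ht : 0 ≤ t)
    (hu : μ • u - D u = a • z + c • r)
    (hK : ∀ m < M, |inner ℝ z ((D ^ m) r)| ≤ t * ‖(D ^ m) r‖) :
    |inner ℝ z u| ≤ |a| * ‖z‖ ^ 2 / (|μ| - Δ)
      + |c| * (t * ‖r‖ / (|μ| - Δ) + (Δ / |μ|) ^ M * ‖r‖ * ‖z‖ / (|μ| - Δ)) := by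
  have hsplit : inner ℝ z u
      = inner ℝ z (u - c • neumannSum D μ r M) + c * inner ℝ z (neumannSum D μ r M) := by
    rw [inner_sub_right, real_inner_smul_right, sub_add_cancel]
  have hrest := norm_sub_smul_neumannSum_le hΔ hD hμ hu M
  rw [norm_smul, Real.norm_eq_abs] at hrest
  rw [hsplit]
  calc _ ≤ ‖z‖ * ‖u - c • neumannSum D μ r M‖ + |c| * |inner ℝ z (neumannSum D μ r M)| := by
        rw [← abs_mul]
        exact (abs_add_le _ _).trans (add_le_add_left (abs_real_inner_le_norm _ _) _)
    _ ≤ ‖z‖ * ((|a| * ‖z‖ + |c| * ((Δ / |μ|) ^ M * ‖r‖)) / (|μ| - Δ))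
        + |c| * (t * ‖r‖ / (|μ| - Δ)) := by
        gcongr
        exact abs_inner_neumannSum_le hΔ hD hμ ht hK
    _ = _ := by ring

end Resolvent

section WeightedGram

variable {E ι : Type*} [NormedAddCommGroup E] [InnerProductSpace ℝ E]

/-- The operator `x ↦ ∑ i ∈ s, w i ⟪z i, x⟫ z i - c x`: the weighted Gram operator of the vectors
`z i`, centred at `c`. -/
noncomputable def weightedGram (s : Finset ι) (w : ι → ℝ) (z : ι → E) (c : ℝ) : E →ₗ[ℝ] E :=
  ∑ i ∈ s, w i • (innerₗ E (z i)).smulRight (z i) - c • LinearMap.id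

/-- The vector `∑ i ∈ s, w i q i z i`, the off-diagonal block of the weighted Gram matrix of the
rows `(q i, z i)`. -/
noncomputable def weightedCross (s : Finset ι) (w q : ι → ℝ) (z : ι → E) : E :=
  ∑ i ∈ s, (w i * q i) • z i

variable (s : Finset ι) (w q : ι → ℝ) (z : ι → E) (c : ℝ)

lemma weightedGram_apply (x : E) :
    weightedGram s w z c x = ∑ i ∈ s, (w i * inner ℝ (z i) x) • z i - c • x := by
  simp [weightedGram, LinearMap.sum_apply, smul_smul]

lemma inner_weightedGram_apply (x y : E) :
    inner ℝ x (weightedGram s w z c y)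
      = ∑ i ∈ s, w i * (inner ℝ x (z i) * inner ℝ y (z i)) - c * inner ℝ x y := by
  rw [weightedGram_apply, inner_sub_right, inner_sum, real_inner_smul_right]
  congr 1
  refine Finset.sum_congr rfl fun i _ => ?_
  rw [real_inner_smul_right, real_inner_comm y]
  ring

lemma isSymmetric_weightedGram : (weightedGram s w z c).IsSymmetric := fun x y => by
  rw [real_inner_comm, inner_weightedGram_apply, inner_weightedGram_apply, real_inner_comm y x]
  simp only [mul_comm (inner ℝ y _)]

lemma inner_weightedCross (x : E) :
    inner ℝ x (weightedCross s w q z) = ∑ i ∈ s, w i * q i * inner ℝ x (z i) := by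
  rw [weightedCross, inner_sum]
  exact Finset.sum_congr rfl fun i _ => real_inner_smul_right _ _ _

variable [DecidableEq ι] {s}

lemma weightedGram_erase_apply {i : ι} (hi : i ∈ s) (x : E) :
    weightedGram (s.erase i) w z c x
      = weightedGram s w z c x - (w i * inner ℝ (z i) x) • z i := by
  rw [weightedGram_apply, weightedGram_apply, ← Finset.add_sum_erase s _ hi]
  abel

lemma weightedCross_erase {i : ι} (hi : i ∈ s) :
    weightedCross (s.erase i) w q z = weightedCross s w q z - (w i * q i) • z i := by
  rw [weightedCross, weightedCross, ← Finset.add_sum_erase s _ hi]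
  abel

variable [Fintype ι]

/-- The `m`-th Krylov vector `D ^ m r` of the weighted Gram operator `D` and cross vector `r` of
the rows `(q j, z j)` with `j ≠ i`. When `w j` depends on `z j` alone, it is independent of `z i`
for independent rows. -/
noncomputable def leaveOneOutKrylov (i : ι) (m : ℕ) : E :=
  (weightedGram (Finset.univ.erase i) w z c ^ m) (weightedCross (Finset.univ.erase i) w q z)

/-- The deterministic estimates on the rows `(q i, z i)` and weights `w i` behind the entrywise
analysis of an eigenvector whose eigenvalue is much larger than the noise level `H`. In the
application `L` is `log (N / δ)`. -/
structure GramControl (H L : ℝ) (M : ℕ) : Prop where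
  gram (x : E) : ‖weightedGram Finset.univ w z c x‖ ≤ 9 * H * ‖x‖
  cross : ‖weightedCross Finset.univ w q z‖ * √L ≤ 2 * H
  weight_mul_sq (i : ι) : |w i| * ‖z i‖ ^ 2 ≤ H
  weight_mul (i : ι) : |w i| * |q i| * ‖z i‖ * √L ≤ H
  norm_le (i : ι) : ‖z i‖ ≤ M
  krylov (i : ι) (m : ℕ) (hm : m < M) : |inner ℝ (z i) (leaveOneOutKrylov w q z c i m)|
    ≤ 4 * √L * ‖leaveOneOutKrylov w q z c i m‖

end WeightedGram

section EntrywiseAnalysis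

variable {E ι : Type*} [NormedAddCommGroup E] [InnerProductSpace ℝ E] [Fintype ι] [DecidableEq ι]
  {w q : ι → ℝ} {z : ι → E} {c H L μ u₁ b : ℝ} {u : E} {M : ℕ}

namespace GramControl

lemma norm_weightedCross_le (h : GramControl w q z c H L M) (hL : 1 ≤ L) :
    ‖weightedCross Finset.univ w q z‖ ≤ 2 * H :=
  (le_mul_of_one_le_right (norm_nonneg _) (Real.one_le_sqrt.2 hL)).trans h.cross

lemma norm_weightedGram_erase_apply_le (h : GramControl w q z c H L M) (i : ι) (x : E) :
    ‖weightedGram (Finset.univ.erase i) w z c x‖ ≤ 10 * H * ‖x‖ := by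
  rw [weightedGram_erase_apply _ _ _ (Finset.mem_univ i)]
  calc _ ≤ ‖weightedGram Finset.univ w z c x‖ + ‖(w i * inner ℝ (z i) x) • z i‖ :=
        norm_sub_le _ _
    _ ≤ 9 * H * ‖x‖ + |w i| * (‖z i‖ * ‖x‖) * ‖z i‖ := by
        rw [norm_smul, Real.norm_eq_abs, abs_mul]
        gcongr
        · exact h.gram x
        · exact abs_real_inner_le_norm _ _
    _ = 9 * H * ‖x‖ + |w i| * ‖z i‖ ^ 2 * ‖x‖ := by ring
    _ ≤ 9 * H * ‖x‖ + H * ‖x‖ := by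
        gcongr
        exact h.weight_mul_sq i
    _ = _ := by ring

lemma norm_weightedCross_erase_mul_sqrt_le (h : GramControl w q z c H L M) (i : ι) :
    ‖weightedCross (Finset.univ.erase i) w q z‖ * √L ≤ 3 * H := by
  have hsub : ‖weightedCross (Finset.univ.erase i) w q z‖
      ≤ ‖weightedCross Finset.univ w q z‖ + |w i| * |q i| * ‖z i‖ := by
    rw [weightedCross_erase _ _ _ (Finset.mem_univ i), ← abs_mul, ← Real.norm_eq_abs, ← norm_smul]
    exact norm_sub_le _ _
  calc _ ≤ (‖weightedCross Finset.univ w q z‖ + |w i| * |q i| * ‖z i‖) * √L := by gcongr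
    _ ≤ 3 * H := by linarith [h.cross, h.weight_mul i]

lemma norm_eigenvector_le (h : GramControl w q z c H L M) (hH : 0 < H) (hL : 1 ≤ L)
    (hμ : 200 * H ≤ |μ|) (hu₁ : |u₁| ≤ 1)
    (hu : weightedGram Finset.univ w z c u + u₁ • weightedCross Finset.univ w q z = μ • u) :
    ‖u‖ ≤ 1 / 50 := by
  refine (norm_le_norm_smul_sub_apply_div h.gram (μ := μ) (by linarith) u).trans ?_
  rw [← hu, add_sub_cancel_left, norm_smul, Real.norm_eq_abs, div_le_iff₀ (by linarith)]
  calc _ ≤ 1 * (2 * H) := by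
        gcongr
        exact h.norm_weightedCross_le hL
    _ ≤ _ := by linarith

lemma abs_weight_mul_add_mul_sq_le (h : GramControl w q z c H L M) {i : ι} (hq : |q i| ≤ b)
    (hu₁ : |u₁| ≤ 1) (x : ℝ) : |w i * (q i * u₁ + x)| * ‖z i‖ ^ 2 ≤ H * (b + |x|) := by
  have hentry : |q i * u₁ + x| ≤ b * 1 + |x| := by
    refine (abs_add_le _ _).trans ?_
    rw [abs_mul]
    gcongr
    exact (abs_nonneg _).trans hq
  calc _ = |w i| * ‖z i‖ ^ 2 * |q i * u₁ + x| := by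
        rw [abs_mul]
        ring
    _ ≤ H * (b * 1 + |x|) :=
        mul_le_mul (h.weight_mul_sq i) hentry (abs_nonneg _)
          ((by positivity : (0 : ℝ) ≤ |w i| * ‖z i‖ ^ 2).trans (h.weight_mul_sq i))
    _ = _ := by rw [mul_one]

lemma neumann_error_le (h : GramControl w q z c H L M) (hH : 0 < H) (hL : 1 ≤ L)
    (hμ : 200 * H ≤ |μ|) (i : ι) :
    4 * √L * ‖weightedCross (Finset.univ.erase i) w q z‖ / (|μ| - 10 * H)
      + (10 * H / |μ|) ^ M * ‖weightedCross (Finset.univ.erase i) w q z‖ * ‖z i‖ / (|μ| - 10 * H)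
      ≤ 15 / 190 := by
  set r := weightedCross (Finset.univ.erase i) w q z
  have hr_sqrt : ‖r‖ * √L ≤ 3 * H := h.norm_weightedCross_erase_mul_sqrt_le i
  have hr : ‖r‖ ≤ 3 * H :=
    (le_mul_of_one_le_right (norm_nonneg _) (Real.one_le_sqrt.2 hL)).trans hr_sqrt
  have hratio : 10 * H / |μ| ≤ 1 / 2 := by
    rw [div_le_iff₀ (by linarith)]
    linarith
  have hdecay : (10 * H / |μ|) ^ M * ‖z i‖ ≤ 1 :=
    calc _ ≤ (1 / 2 : ℝ) ^ M * 2 ^ M := by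
          gcongr
          exact (h.norm_le i).trans (mod_cast Nat.lt_two_pow_self.le)
      _ = 1 := by rw [← mul_pow, one_div_mul_cancel two_ne_zero, one_pow]
  calc _ = (4 * (‖r‖ * √L) + (10 * H / |μ|) ^ M * ‖z i‖ * ‖r‖) / (|μ| - 10 * H) := by ring
    _ ≤ (4 * (3 * H) + 1 * (3 * H)) / (190 * H) := by
        gcongr
        linarith
    _ = 15 / 190 := by
        field_simp
        norm_num

lemma abs_inner_eigenvector_le (h : GramControl w q z c H L M) (hH : 0 < H) (hL : 1 ≤ L)
    (hμ : 200 * H ≤ |μ|) (hb : 1 ≤ b) (hq : ∀ i, |q i| ≤ b) (hu₁ : |u₁| ≤ 1)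
    (hu : weightedGram Finset.univ w z c u + u₁ • weightedCross Finset.univ w q z = μ • u)
    (i : ι) : |inner ℝ (z i) u| ≤ b / 10 := by
  have hresolvent : μ • u - weightedGram (Finset.univ.erase i) w z c u
      = (w i * (q i * u₁ + inner ℝ (z i) u)) • z i
        + u₁ • weightedCross (Finset.univ.erase i) w q z := by
    rw [weightedGram_erase_apply _ _ _ (Finset.mem_univ i),
      weightedCross_erase _ _ _ (Finset.mem_univ i), ← hu]
    module
  have hinner := abs_inner_le_of_resolvent (by positivity)
    (h.norm_weightedGram_erase_apply_le i) (by linarith) (by positivity) hresolvent (h.krylov i)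
  have hself : |w i * (q i * u₁ + inner ℝ (z i) u)| * ‖z i‖ ^ 2 / (|μ| - 10 * H)
      ≤ (b + |inner ℝ (z i) u|) / 190 :=
    calc _ ≤ H * (b + |inner ℝ (z i) u|) / (190 * H) :=
          div_le_div₀ (by positivity) (h.abs_weight_mul_add_mul_sq_le (hq i) hu₁ _)
            (by positivity) (by linarith)
      _ = _ := by field_simp
  have herror := mul_le_mul hu₁ (h.neumann_error_le hH hL hμ i)
    (by have : 0 < |μ| - 10 * H := by linarith
        positivity) zero_le_one
  linarith

lemma exists_sign_forall_abs_sub_lt (h : GramControl w q z c H L M) (hH : 0 < H) (hL : 1 ≤ L)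
    (hμ : 200 * H ≤ |μ|) (hb : 1 ≤ b) (hq : ∀ i, |q i| ≤ b) (hnorm : u₁ ^ 2 + ‖u‖ ^ 2 = 1)
    (hu : weightedGram Finset.univ w z c u + u₁ • weightedCross Finset.univ w q z = μ • u) :
    ∃ s : ℝ, (s = 1 ∨ s = -1) ∧ ∀ i, |q i * u₁ + inner ℝ (z i) u - s * q i| < b / 2 := by
  have hu₁ : |u₁| ≤ 1 := by
    rw [← sq_le_one_iff_abs_le_one]
    linarith [sq_nonneg ‖u‖]
  have hu_small := h.norm_eigenvector_le hH hL hμ hu₁ hu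
  have hu₁_large : 99 / 100 ≤ |u₁| := by
    refine abs_le_of_sq_le_sq ?_ (abs_nonneg _) |> (le_abs_self _).trans
    have : ‖u‖ ^ 2 ≤ (1 / 50) ^ 2 := by gcongr
    rw [sq_abs]
    linarith
  obtain ⟨s, hs, hsu⟩ : ∃ s : ℝ, (s = 1 ∨ s = -1) ∧ |u₁ - s| ≤ 1 / 100 := by
    rcases abs_cases u₁ with ⟨habs, -⟩ | ⟨habs, -⟩ <;> rw [habs] at hu₁ hu₁_large
    · exact ⟨1, .inl rfl, abs_le.2 ⟨by linarith, by linarith⟩⟩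
    · exact ⟨-1, .inr rfl, abs_le.2 ⟨by linarith, by linarith⟩⟩
  refine ⟨s, hs, fun i => ?_⟩
  calc _ = |q i * (u₁ - s) + inner ℝ (z i) u| := by ring_nf
    _ ≤ |q i| * |u₁ - s| + |inner ℝ (z i) u| := (abs_add_le _ _).trans_eq (by rw [abs_mul])
    _ ≤ b * (1 / 100) + b / 10 :=
        add_le_add (mul_le_mul (hq i) hsu (abs_nonneg _) (by positivity))
          (h.abs_inner_eigenvector_le hH hL hμ hb hq hu₁ hu i)
    _ < b / 2 := by linarith

end GramControl

end EntrywiseAnalysis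

/-! ### The noise event -/

section NoiseRegime

/-- The deviation that `|excess z|` exceeds with probability at most `2 * exp (-3 * L)` for a
standard Gaussian vector `z` of dimension at most `n`. -/
noncomputable def excessBound (n L : ℝ) : ℝ := 16 * (√(n * L) + L)

/-- The parameters for which the noise in the weighted Gram matrix of `N` rows of dimension `n` and
sparsity `ρ` stays below a fraction `κ` of the signal `N / ρ`, up to probability `exp (-L)`.
The constant `10 ^ 8` is not optimised. -/
structure NoiseRegime (N n κ ρ L : ℝ) : Prop where
  κ_pos : 0 < κ
  κ_le_one : κ ≤ 1
  ρ_pos : 0 < ρ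
  ρ_le_one : ρ ≤ 1
  one_le_n : 1 ≤ n
  one_le_L : 1 ≤ L
  one_le_mul : 1 ≤ ρ * N
  excess_small : 10 ^ 8 * (L * (n + L) * (1 + ρ * excessBound n L) ^ 2) ≤ κ ^ 2 * N
  dim_small : 10 ^ 8 * ((n + L) * (n * ρ ^ 2)) ≤ κ ^ 2 * N
  signal_small : 10 ^ 8 * (L * (n * ρ)) ≤ κ ^ 2 * N

variable {N n κ ρ L : ℝ}

lemma excessBound_pos (hL : 0 < L) : 0 < excessBound n L := by
  unfold excessBound
  positivity

lemma add_excessBound_le (hn : 0 ≤ n) (hL : 0 ≤ L) : n + excessBound n L ≤ 33 * (n + L) := by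
  have : √(n * L) ≤ n + L := by
    rw [Real.sqrt_le_left (by positivity)]
    nlinarith
  unfold excessBound
  linarith

lemma excessBound_sq_le (hn : 0 ≤ n) (hL : 0 ≤ L) : excessBound n L ^ 2 ≤ 512 * (L * (n + L)) := by
  have := Real.sq_sqrt (mul_nonneg hn hL)
  unfold excessBound
  nlinarith [sq_nonneg (√(n * L) - L)]

lemma exists_excess_exponent (hn : 0 < n) (hL : 0 < L) :
    ∃ s, 0 ≤ s ∧ s ≤ 1 / 4 ∧
      ∀ d ≤ n, 2 * s ^ 2 * d - s * excessBound n L ≤ -(3 * L) := by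
  have hσ : 0 < √(n * L) + L := by positivity
  refine ⟨L / (4 * (√(n * L) + L)), by positivity, ?_, fun d hd => ?_⟩
  · rw [div_le_div_iff₀ (by positivity) (by norm_num)]
    linarith [Real.sqrt_nonneg (n * L)]
  have hmain : L / (4 * (√(n * L) + L)) * excessBound n L = 4 * L := by
    unfold excessBound
    field_simp
    norm_num
  have hvar : 2 * (L / (4 * (√(n * L) + L))) ^ 2 * d ≤ L := by
    have hsq : L * d ≤ (√(n * L) + L) ^ 2 := by
      nlinarith [Real.sq_sqrt (mul_pos hn hL).le, Real.sqrt_nonneg (n * L)]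
    calc _ = L * (L * d) / (8 * (√(n * L) + L) ^ 2) := by
          field_simp
          ring
      _ ≤ L * (√(n * L) + L) ^ 2 / (8 * (√(n * L) + L) ^ 2) := by gcongr
      _ = L / 8 := by field_simp
      _ ≤ L := by linarith
  linarith

namespace NoiseRegime

lemma L_pos (h : NoiseRegime N n κ ρ L) : 0 < L := by linarith [h.one_le_L]

lemma n_pos (h : NoiseRegime N n κ ρ L) : 0 < n := by linarith [h.one_le_n]

lemma N_pos (h : NoiseRegime N n κ ρ L) : 0 < N :=
  pos_of_mul_pos_right (by linarith [h.one_le_mul]) h.ρ_pos.le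

lemma signal_pos (h : NoiseRegime N n κ ρ L) : 0 < κ * N / ρ :=
  div_pos (mul_pos h.κ_pos h.N_pos) h.ρ_pos

lemma one_le_one_add_mul_excessBound (h : NoiseRegime N n κ ρ L) :
    1 ≤ 1 + ρ * excessBound n L := by
  linarith [mul_pos h.ρ_pos (excessBound_pos (n := n) h.L_pos)]

lemma mul_N_le (h : NoiseRegime N n κ ρ L) : κ * N ≤ N :=
  mul_le_of_le_one_left h.N_pos.le h.κ_le_one

lemma sq_mul_N_le (h : NoiseRegime N n κ ρ L) : κ ^ 2 * N ≤ κ * N := by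
  rw [sq, mul_assoc]
  exact mul_le_of_le_one_left (mul_pos h.κ_pos h.N_pos).le h.κ_le_one

lemma mul_add_excessBound_mul_le (h : NoiseRegime N n κ ρ L) :
    (1 + ρ * excessBound n L) ^ 2 * (n + excessBound n L) * L ≤ κ ^ 2 * N := by
  have := h.L_pos
  have hsmall := h.excess_small
  calc _ ≤ (1 + ρ * excessBound n L) ^ 2 * (33 * (n + L)) * L := by
        gcongr
        exact add_excessBound_le h.n_pos.le h.L_pos.le
    _ = 33 * (L * (n + L) * (1 + ρ * excessBound n L) ^ 2) := by ring
    _ ≤ _ := by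
        have : 0 ≤ L * (n + L) * (1 + ρ * excessBound n L) ^ 2 := by
          have := h.n_pos
          positivity
        linarith

lemma mul_add_excessBound_le (h : NoiseRegime N n κ ρ L) :
    (1 + ρ * excessBound n L) * (n + excessBound n L) ≤ κ * N := by
  have hone := h.one_le_one_add_mul_excessBound
  have hpos : 0 < n + excessBound n L := add_pos h.n_pos (excessBound_pos h.L_pos)
  calc _ ≤ (1 + ρ * excessBound n L) * (n + excessBound n L) * ((1 + ρ * excessBound n L) * L) :=
        le_mul_of_one_le_right (by positivity) (one_le_mul_of_one_le_of_one_le hone h.one_le_L)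
    _ = (1 + ρ * excessBound n L) ^ 2 * (n + excessBound n L) * L := by ring
    _ ≤ κ * N := h.mul_add_excessBound_mul_le.trans h.sq_mul_N_le

lemma add_excessBound_le_N (h : NoiseRegime N n κ ρ L) : n + excessBound n L ≤ N :=
  (le_mul_of_one_le_left (add_pos h.n_pos (excessBound_pos h.L_pos)).le
    h.one_le_one_add_mul_excessBound).trans (h.mul_add_excessBound_le.trans h.mul_N_le)

lemma mul_add_mul_sq_le (h : NoiseRegime N n κ ρ L) :
    19200000 * ((n + L) * (1 + ρ * excessBound n L + n * ρ ^ 2)) ≤ κ ^ 2 * N := by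
  have hone := h.one_le_one_add_mul_excessBound
  have hmono : (n + L) * (1 + ρ * excessBound n L) ≤ L * (n + L) * (1 + ρ * excessBound n L) ^ 2 :=
    calc _ ≤ (n + L) * (1 + ρ * excessBound n L) * (L * (1 + ρ * excessBound n L)) :=
          le_mul_of_one_le_right (mul_nonneg (add_pos h.n_pos h.L_pos).le (by positivity))
            (one_le_mul_of_one_le_of_one_le h.one_le_L hone)
      _ = _ := by ring
  rw [mul_add (n + L)]
  linarith [h.excess_small, h.dim_small, mul_nonneg (sq_nonneg κ) h.N_pos.le]

lemma mul_add_mul_le (h : NoiseRegime N n κ ρ L) : 64 * (L * (1 + n * ρ)) ≤ κ ^ 2 * N := by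
  have hpos := h.n_pos
  have hL : L ≤ L * (n + L) * (1 + ρ * excessBound n L) ^ 2 := by
    rw [mul_assoc]
    exact le_mul_of_one_le_right h.L_pos.le (one_le_mul_of_one_le_of_one_le
      (by linarith [h.one_le_L]) (one_le_pow₀ h.one_le_one_add_mul_excessBound))
  rw [mul_add L]
  linarith [h.excess_small, h.signal_small, mul_nonneg (sq_nonneg κ) h.N_pos.le]

lemma exists_signal_exponent (h : NoiseRegime N n κ ρ L) :
    ∃ s, 0 ≤ s ∧ s * (1 / ρ) ≤ 1 / 4 ∧ ∀ d ≤ n, ∀ A, 0 ≤ A → A ≤ 2 * N / ρ →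
      2 * s ^ 2 * d * A - s * (κ * N / ρ) ≤ -(2 * L) := by
  obtain ⟨hκ, hκ1, hρ, hn, hN⟩ : 0 < κ ∧ κ ≤ 1 ∧ 0 < ρ ∧ 0 < n ∧ 0 < N :=
    ⟨h.κ_pos, h.κ_le_one, h.ρ_pos, h.n_pos, h.N_pos⟩
  have hnρ : 0 < n * ρ := mul_pos hn hρ
  have hs : 0 < κ * ρ / (8 * (1 + n * ρ)) := by positivity
  have hsn : 4 * (κ * ρ / (8 * (1 + n * ρ))) * n ≤ κ / 2 := by
    rw [show 4 * (κ * ρ / (8 * (1 + n * ρ))) * n = κ * (n * ρ) / (2 * (1 + n * ρ)) by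
      field_simp; norm_num, div_le_div_iff₀ (by positivity) (by norm_num)]
    nlinarith
  have hmain : 8 * L ≤ κ * ρ / (8 * (1 + n * ρ)) * (κ * N / ρ) := by
    rw [show κ * ρ / (8 * (1 + n * ρ)) * (κ * N / ρ) = κ ^ 2 * N / (8 * (1 + n * ρ)) by
      field_simp, le_div_iff₀ (by positivity)]
    linarith [h.mul_add_mul_le]
  refine ⟨κ * ρ / (8 * (1 + n * ρ)), hs.le, ?_, fun d hd A hA hA' => ?_⟩
  · rw [show κ * ρ / (8 * (1 + n * ρ)) * (1 / ρ) = κ / (8 * (1 + n * ρ)) by field_simp,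
      div_le_div_iff₀ (by positivity) (by norm_num)]
    linarith
  generalize κ * ρ / (8 * (1 + n * ρ)) = s at *
  have hvar : 2 * s ^ 2 * d * A ≤ s * (κ * N / ρ) / 2 :=
    calc _ ≤ 2 * s ^ 2 * n * (2 * N / ρ) := by gcongr
      _ = 4 * s * n * (s * (N / ρ)) := by ring
      _ ≤ κ / 2 * (s * (N / ρ)) := by gcongr
      _ = _ := by ring
  linarith [h.L_pos]

lemma exists_quadratic_exponent (h : NoiseRegime N n κ ρ L) :
    ∃ s, 0 < s ∧ s * (1 / ρ + excessBound n L) ≤ 1 / 8 ∧ ∀ A ≤ 2 * N / ρ + N * n,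
      300000 * s ^ 2 * A - s * (κ * N / ρ) ≤ -(4 * n + 2 * L) := by
  obtain ⟨hκ, hκ1, hρ, hn, hN⟩ : 0 < κ ∧ κ ≤ 1 ∧ 0 < ρ ∧ 0 < n ∧ 0 < N :=
    ⟨h.κ_pos, h.κ_le_one, h.ρ_pos, h.n_pos, h.N_pos⟩
  have hT : 0 < excessBound n L := excessBound_pos h.L_pos
  set R := 1 / ρ + excessBound n L with hR
  have hR1 : 1 ≤ R := by linarith [(one_le_div hρ).2 h.ρ_le_one]
  have hnρ : 0 < n * ρ := mul_pos hn hρ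
  set s := κ / 2400000 / (R + n * ρ) with hs
  have hs0 : 0 < s := by positivity
  have hsR : s * (R + n * ρ) = κ / 2400000 := by rw [hs]; field_simp
  have hmain : 2 * (4 * n + 2 * L) ≤ s * (κ * N / ρ) := by
    rw [show s * (κ * N / ρ) = κ ^ 2 * N / (2400000 * (1 + ρ * excessBound n L + n * ρ ^ 2)) by
      rw [hs, hR]; field_simp, le_div_iff₀ (by positivity)]
    calc _ ≤ 8 * (n + L) * (2400000 * (1 + ρ * excessBound n L + n * ρ ^ 2)) :=
          mul_le_mul_of_nonneg_right (by linarith [h.L_pos]) (by positivity)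
      _ = 19200000 * ((n + L) * (1 + ρ * excessBound n L + n * ρ ^ 2)) := by ring
      _ ≤ _ := h.mul_add_mul_sq_le
  refine ⟨s, hs0, by nlinarith, fun A hA => ?_⟩
  have hvar : 300000 * s ^ 2 * A ≤ s * (κ * N / ρ) / 2 :=
    calc _ ≤ 300000 * s ^ 2 * (2 * N / ρ * (1 + n * ρ)) := by
          gcongr
          refine hA.trans ?_
          rw [mul_one_add, show 2 * N / ρ * (n * ρ) = 2 * (N * n) by field_simp]
          linarith [mul_pos hN hn]
      _ = 600000 * s * (N / ρ) * (s * (1 + n * ρ)) := by ring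
      _ ≤ 600000 * s * (N / ρ) * (s * (R + n * ρ)) := by gcongr
      _ = s * (κ * N / ρ) / 4 := by rw [hsR]; ring
      _ ≤ _ := by linarith [mul_pos hs0 h.signal_pos]
  linarith

lemma exists_linear_exponent (h : NoiseRegime N n κ ρ L) :
    ∃ s, 0 ≤ s ∧ ∀ A ≤ 2 * N,
      s ^ 2 * (1 / ρ + excessBound n L) ^ 2 / 2 * A - s * (κ * N / ρ / √L)
        ≤ -(4 * n + 2 * L) := by
  obtain ⟨hκ, hρ, hn, hN, hL⟩ : 0 < κ ∧ 0 < ρ ∧ 0 < n ∧ 0 < N ∧ 0 < L :=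
    ⟨h.κ_pos, h.ρ_pos, h.n_pos, h.N_pos, h.L_pos⟩
  have hT : 0 < excessBound n L := excessBound_pos h.L_pos
  set R := 1 / ρ + excessBound n L with hR
  have hR0 : 0 < R := by positivity
  set K := κ * N / ρ / √L with hK
  have hK0 : 0 < K := by positivity
  refine ⟨K / (2 * (R ^ 2 * N)), by positivity, fun A hA => ?_⟩
  calc _ ≤ (K / (2 * (R ^ 2 * N))) ^ 2 * R ^ 2 / 2 * (2 * N) - K / (2 * (R ^ 2 * N)) * K := by
        gcongr
    _ = -(K ^ 2 / (4 * (R ^ 2 * N))) := by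
        field_simp
        ring
    _ = -(κ ^ 2 * N / (4 * (L * (1 + ρ * excessBound n L) ^ 2))) := by
        have hRρ : R = (1 + ρ * excessBound n L) / ρ := by rw [hR]; field_simp
        rw [hK, div_pow, Real.sq_sqrt hL.le, hRρ]
        field_simp
    _ ≤ _ := by
        rw [neg_le_neg_iff, le_div_iff₀ (by positivity)]
        calc _ ≤ 4 * (n + L) * (4 * (L * (1 + ρ * excessBound n L) ^ 2)) := by
              gcongr
              linarith
          _ = 16 * (L * (n + L) * (1 + ρ * excessBound n L) ^ 2) := by ring
          _ ≤ _ := by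
              have : 0 < L * (n + L) * (1 + ρ * excessBound n L) ^ 2 := by positivity
              linarith [h.excess_small]

end NoiseRegime

end NoiseRegime

section BalancedSignal

variable {N : ℕ} {κ ρ : ℝ} {q : Fin N → ℝ}

/-- A signal of `N` entries of size at most `1 / √ρ` whose squared norm is `N` up to a factor
`1 ± κ`, as is typical of `√N • v` for `v` Bernoulli–Rademacher of sparsity `ρ`. -/
structure BalancedSignal (q : Fin N → ℝ) (κ ρ : ℝ) : Prop where
  sq_le (i : Fin N) : q i ^ 2 ≤ 1 / ρ
  abs_sum_sub_le : |∑ i, q i ^ 2 - N| ≤ κ * N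

namespace BalancedSignal

lemma sum_sq_le (hq : BalancedSignal q κ ρ) (hκ : κ ≤ 1) : ∑ i, q i ^ 2 ≤ 2 * N := by
  have : κ * N ≤ N := mul_le_of_le_one_left N.cast_nonneg hκ
  linarith [(abs_le.1 hq.abs_sum_sub_le).2]

lemma sum_sq_sq_le (hq : BalancedSignal q κ ρ) (hκ : κ ≤ 1) (hρ : 0 < ρ) :
    ∑ i, (q i ^ 2) ^ 2 ≤ 2 * N / ρ :=
  calc _ ≤ ∑ i, 1 / ρ * q i ^ 2 := by
        gcongr with i
        rw [sq (q i ^ 2)]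
        gcongr
        exact hq.sq_le i
    _ ≤ 1 / ρ * (2 * N) := by
        rw [← Finset.mul_sum]
        gcongr
        exact hq.sum_sq_le hκ
    _ = _ := by ring

end BalancedSignal

end BalancedSignal

section NoiseEvent

variable {E : Type*} [NormedAddCommGroup E] [InnerProductSpace ℝ E] {N : ℕ} {κ ρ n L T H : ℝ}
  {q : Fin N → ℝ} {z : Fin N → E}

/-- The weight `‖(q i, z i)‖ ^ 2 - dim E` of the row `(q i, z i)`. -/
noncomputable def rowWeight (q : Fin N → ℝ) (z : Fin N → E) (i : Fin N) : ℝ :=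
  q i ^ 2 + excess (z i)

/-- The event that the Gaussian rows `z` obey, at noise level `H`, all the estimates behind the
entrywise analysis of the leading eigenvector. -/
structure NoiseEvent (q : Fin N → ℝ) (H L : ℝ) (z : Fin N → E) : Prop
    extends GramControl (rowWeight q z) q z (3 * N) H L N where
  signal : |∑ i, q i ^ 2 * excess (z i)| ≤ H

lemma norm_sq_le_of_abs_excess_le {x : E} (hE : (Module.finrank ℝ E : ℝ) ≤ n)
    (hx : |excess x| ≤ T) : ‖x‖ ^ 2 ≤ n + T := by
  have := (abs_le.1 hx).2
  unfold excess at this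
  linarith

lemma BalancedSignal.abs_rowWeight_le (hq : BalancedSignal q κ ρ) {i : Fin N}
    (hz : |excess (z i)| ≤ T) : |rowWeight q z i| ≤ 1 / ρ + T := by
  refine (abs_add_le _ _).trans (add_le_add ?_ hz)
  rw [abs_of_nonneg (sq_nonneg _)]
  exact hq.sq_le i

lemma NoiseRegime.abs_rowWeight_mul_norm_sq_le (h : NoiseRegime N n κ ρ L)
    (hE : (Module.finrank ℝ E : ℝ) ≤ n) (hq : BalancedSignal q κ ρ) {i : Fin N}
    (hz : |excess (z i)| ≤ excessBound n L) : |rowWeight q z i| * ‖z i‖ ^ 2 ≤ κ * N / ρ := by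
  have hρ := h.ρ_pos
  calc _ ≤ (1 / ρ + excessBound n L) * (n + excessBound n L) := by
        gcongr
        exacts [(abs_nonneg _).trans (hq.abs_rowWeight_le hz), hq.abs_rowWeight_le hz,
          norm_sq_le_of_abs_excess_le hE hz]
    _ = (1 + ρ * excessBound n L) * (n + excessBound n L) / ρ := by field_simp
    _ ≤ _ := div_le_div_of_nonneg_right h.mul_add_excessBound_le hρ.le

lemma NoiseRegime.abs_rowWeight_mul_norm_mul_sqrt_le (h : NoiseRegime N n κ ρ L)
    (hE : (Module.finrank ℝ E : ℝ) ≤ n) (hq : BalancedSignal q κ ρ) {i : Fin N}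
    (hz : |excess (z i)| ≤ excessBound n L) :
    |rowWeight q z i| * |q i| * ‖z i‖ * √L ≤ κ * N / ρ := by
  have hρ := h.ρ_pos
  have hL := h.L_pos
  have hpos : 0 < n + excessBound n L := add_pos h.n_pos (excessBound_pos hL)
  refine (abs_le_of_sq_le_sq' ?_ h.signal_pos.le).2
  calc (|rowWeight q z i| * |q i| * ‖z i‖ * √L) ^ 2
      = |rowWeight q z i| ^ 2 * q i ^ 2 * ‖z i‖ ^ 2 * L := by
        rw [mul_pow, mul_pow, mul_pow, sq_abs (q i), Real.sq_sqrt hL.le]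
    _ ≤ (1 / ρ + excessBound n L) ^ 2 * (1 / ρ) * (n + excessBound n L) * L := by
        gcongr
        exacts [hq.abs_rowWeight_le hz, hq.sq_le i, norm_sq_le_of_abs_excess_le hE hz]
    _ = (1 + ρ * excessBound n L) ^ 2 * (n + excessBound n L) * L * (1 / ρ ^ 3) := by
        field_simp
    _ ≤ κ ^ 2 * N * (1 / ρ ^ 3) :=
        mul_le_mul_of_nonneg_right h.mul_add_excessBound_mul_le (by positivity)
    _ ≤ κ ^ 2 * N * (1 / ρ ^ 3) * (ρ * N) := le_mul_of_one_le_right (by positivity) h.one_le_mul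
    _ = _ := by field_simp

lemma inner_weightedGram_rowWeight_self (c : ℝ) (p : E) :
    inner ℝ p (weightedGram Finset.univ (rowWeight q z) z c p)
      = ∑ i, (q i ^ 2 + excess (z i)) * inner ℝ p (z i) ^ 2 - ‖p‖ ^ 2 * c := by
  simp only [inner_weightedGram_apply, rowWeight, ← sq, real_inner_self_eq_norm_sq, mul_comm c]

variable {P : Finset E}

-- The weighted Gram operator concentrates around `∑ i, (q i ^ 2 + 2)`, which is nearly `3 * N`.
lemma norm_weightedGram_rowWeight_le [FiniteDimensional ℝ E]
    (hP : Metric.IsCover 2⁻¹ (Metric.closedBall 0 1) (P : Set E))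
    (hH : |∑ i, q i ^ 2 - N| ≤ H)
    (hgram : ∀ p ∈ polarizationVectors P, |inner ℝ p
      (weightedGram Finset.univ (rowWeight q z) z (∑ i, (q i ^ 2 + 2)) p)| ≤ H) (x : E) :
    ‖weightedGram Finset.univ (rowWeight q z) z (3 * N) x‖ ≤ 9 * H * ‖x‖ := by
  have hrecentre : weightedGram Finset.univ (rowWeight q z) z (3 * N) x
      = weightedGram Finset.univ (rowWeight q z) z (∑ i, (q i ^ 2 + 2)) x
        + (∑ i, q i ^ 2 - N) • x := by
    rw [weightedGram_apply, weightedGram_apply, Finset.sum_add_distrib, Finset.sum_const,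
      Finset.card_fin, nsmul_eq_mul]
    module
  rw [hrecentre]
  calc _ ≤ 8 * H * ‖x‖ + H * ‖x‖ := by
        refine (norm_add_le _ _).trans (add_le_add
          (norm_apply_le_of_polarizationVectors hP (isSymmetric_weightedGram _ _ _ _) hgram x) ?_)
        rw [norm_smul, Real.norm_eq_abs]
        gcongr
    _ = _ := by ring

lemma norm_weightedCross_mul_sqrt_le (hP : Metric.IsCover 2⁻¹ (Metric.closedBall 0 1) (P : Set E))
    (hL : 0 < L) {w : Fin N → ℝ}
    (hcross : ∀ p ∈ P, inner ℝ p (weightedCross Finset.univ w q z) ≤ H / √L) :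
    ‖weightedCross Finset.univ w q z‖ * √L ≤ 2 * H :=
  calc _ ≤ 2 * (H / √L) * √L := by
        gcongr
        exact norm_le_of_isCover hP hcross
    _ = _ := by field_simp

lemma NoiseRegime.noiseEvent [FiniteDimensional ℝ E] (h : NoiseRegime N n κ ρ L)
    (hE : (Module.finrank ℝ E : ℝ) ≤ n) (hq : BalancedSignal q κ ρ)
    (hP : Metric.IsCover 2⁻¹ (Metric.closedBall 0 1) (P : Set E))
    (hexcess : ∀ i, |excess (z i)| ≤ excessBound n L)
    (hsignal : |∑ i, q i ^ 2 * excess (z i)| ≤ κ * N / ρ)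
    (hgram : ∀ p ∈ polarizationVectors P, |inner ℝ p
      (weightedGram Finset.univ (rowWeight q z) z (∑ i, (q i ^ 2 + 2)) p)| ≤ κ * N / ρ)
    (hcross : ∀ p ∈ P, inner ℝ p (weightedCross Finset.univ (rowWeight q z) q z)
      ≤ κ * N / ρ / √L)
    (hkrylov : ∀ i, ∀ m < N, |inner ℝ (z i) (leaveOneOutKrylov (rowWeight q z) q z (3 * N) i m)|
      ≤ 4 * √L * ‖leaveOneOutKrylov (rowWeight q z) q z (3 * N) i m‖) :
    NoiseEvent q (κ * N / ρ) L z where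
  gram := norm_weightedGram_rowWeight_le hP (hq.abs_sum_sub_le.trans
    ((le_div_iff₀ h.ρ_pos).2 (mul_le_of_le_one_right (mul_pos h.κ_pos h.N_pos).le h.ρ_le_one)))
    hgram
  cross := norm_weightedCross_mul_sqrt_le hP h.L_pos hcross
  weight_mul_sq i := h.abs_rowWeight_mul_norm_sq_le hE hq (hexcess i)
  weight_mul i := h.abs_rowWeight_mul_norm_mul_sqrt_le hE hq (hexcess i)
  norm_le i := by
    have hN : (1 : ℝ) ≤ N :=
      h.one_le_mul.trans (mul_le_of_le_one_left N.cast_nonneg h.ρ_le_one)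
    refine (abs_le_of_sq_le_sq' ?_ N.cast_nonneg).2
    calc ‖z i‖ ^ 2 ≤ N :=
          (norm_sq_le_of_abs_excess_le hE (hexcess i)).trans h.add_excessBound_le_N
      _ ≤ (N : ℝ) ^ 2 := le_self_pow₀ hN two_ne_zero
  krylov := hkrylov
  signal := hsignal

lemma continuous_leaveOneOutKrylov (q : Fin N → ℝ) (c : ℝ) (i : Fin N) (m : ℕ) :
    Continuous fun z : Fin N → E => leaveOneOutKrylov (rowWeight q z) q z c i m := by
  have := continuous_excess (E := E)
  unfold leaveOneOutKrylov rowWeight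
  induction m with
  | zero =>
    simp only [pow_zero, Module.End.one_apply, weightedCross]
    fun_prop
  | succ m ih =>
    simp only [pow_succ', Module.End.mul_apply, weightedGram_apply] at ih ⊢
    fun_prop

lemma leaveOneOutKrylov_update (q : Fin N → ℝ) (c : ℝ) (i : Fin N) (m : ℕ) (z : Fin N → E)
    (x : E) :
    leaveOneOutKrylov (rowWeight q (Function.update z i x)) q (Function.update z i x) c i m
      = leaveOneOutKrylov (rowWeight q z) q z c i m := by
  have hupd (j : Fin N) (hj : j ∈ Finset.univ.erase i) : Function.update z i x j = z j :=
    Function.update_of_ne (Finset.ne_of_mem_erase hj) x z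
  unfold leaveOneOutKrylov weightedGram weightedCross rowWeight
  rw [Finset.sum_congr rfl fun j hj => by rw [hupd j hj],
    Finset.sum_congr (g := fun j => ((q j ^ 2 + excess (z j)) * q j) • z j) rfl
      fun j hj => by rw [hupd j hj]]

end NoiseEvent

section NoiseProbability

lemma natCast_mul_exp_le {m D : ℕ} {n L : ℝ} (hm : m ≤ 2 * 25 ^ D) (hD : (D : ℝ) ≤ n) :
    m * exp (-(4 * n + 2 * L)) ≤ 2 * exp (-(2 * L)) := by
  have h25 : (25 : ℝ) ≤ exp 4 :=
    calc (25 : ℝ) ≤ 2.7 ^ 4 := by norm_num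
      _ ≤ exp 1 ^ 4 := by
          gcongr
          linarith [Real.exp_one_gt_d9]
      _ = exp 4 := by rw [← Real.exp_nat_mul]; norm_num
  have hcard : (m : ℝ) ≤ 2 * exp (4 * n) :=
    calc (m : ℝ) ≤ 2 * 25 ^ D := by exact_mod_cast hm
      _ ≤ 2 * exp 4 ^ D := by gcongr
      _ = 2 * exp (4 * D) := by rw [← Real.exp_nat_mul, mul_comm (D : ℝ)]
      _ ≤ _ := by gcongr
  calc _ ≤ 2 * exp (4 * n) * exp (-(4 * n + 2 * L)) := by gcongr
    _ = 2 * exp (-(2 * L)) := by rw [mul_assoc, ← Real.exp_add]; congr 2; ring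

lemma measure_exists_mem_finset_le {Ω β : Type*} [MeasurableSpace Ω] {μ : Measure Ω} {S : Finset β}
    {D : ℕ} {n L b : ℝ} (hS : S.card ≤ 2 * 25 ^ D) (hD : (D : ℝ) ≤ n) (hb : 0 ≤ b)
    {A : β → Set Ω} (hA : ∀ p ∈ S, μ (A p) ≤ ofReal (b * exp (-(4 * n + 2 * L)))) :
    μ {ω | ∃ p ∈ S, ω ∈ A p} ≤ ofReal (2 * b * exp (-(2 * L))) :=
  calc _ = μ (⋃ p ∈ S, A p) := by congr 1; ext; simp
    _ ≤ ∑ _ ∈ S, ofReal (b * exp (-(4 * n + 2 * L))) :=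
        (measure_biUnion_finset_le _ _).trans (Finset.sum_le_sum hA)
    _ = ofReal (b * (S.card * exp (-(4 * n + 2 * L)))) := by
        rw [Finset.sum_const, nsmul_eq_mul, ← ENNReal.ofReal_natCast,
          ← ENNReal.ofReal_mul (Nat.cast_nonneg _), mul_left_comm]
    _ ≤ ofReal (b * (2 * exp (-(2 * L)))) :=
        ENNReal.ofReal_le_ofReal (mul_le_mul_of_nonneg_left (natCast_mul_exp_le hS hD) hb)
    _ = _ := by rw [← mul_assoc, mul_comm b]

variable {E : Type*} [NormedAddCommGroup E] [InnerProductSpace ℝ E] [FiniteDimensional ℝ E]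
  [MeasurableSpace E] [BorelSpace E] {N : ℕ} {κ ρ n L : ℝ} {q : Fin N → ℝ} {P : Finset E}

lemma measure_pi_exists_excessBound_lt_le (hn : 0 < n) (hE : (Module.finrank ℝ E : ℝ) ≤ n)
    (hL : 0 < L) (hN : N ≤ exp L) :
    Measure.pi (fun _ : Fin N => stdGaussian E) {z | ∃ i, excessBound n L < |excess (z i)|}
      ≤ ofReal (2 * exp (-(2 * L))) := by
  obtain ⟨s, hs, hs', hexp⟩ := exists_excess_exponent hn hL
  have htail : stdGaussian E {x | excessBound n L < |excess x|} ≤ ofReal (2 * exp (-(3 * L))) :=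
    (stdGaussian_lt_abs_excess_le hs hs' _).trans (by gcongr; exact hexp _ hE)
  have := measurable_excess (E := E)
  calc _ ≤ Fintype.card (Fin N) * ofReal (2 * exp (-(3 * L))) :=
        measure_pi_exists_mem_le (S := fun _ => {x : E | excessBound n L < |excess x|})
          (fun _ => measurableSet_lt (by fun_prop) (by fun_prop)) fun _ => htail
    _ = ofReal (2 * (N * exp (-(3 * L)))) := by
        rw [Fintype.card_fin, ← ENNReal.ofReal_natCast, ← ENNReal.ofReal_mul N.cast_nonneg,
          mul_left_comm]
    _ ≤ ofReal (2 * (exp L * exp (-(3 * L)))) := by gcongr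
    _ = _ := by rw [← Real.exp_add]; congr 3; ring

lemma NoiseRegime.measure_pi_lt_abs_signal_le (h : NoiseRegime N n κ ρ L)
    (hE : (Module.finrank ℝ E : ℝ) ≤ n) (hq : BalancedSignal q κ ρ) :
    Measure.pi (fun _ : Fin N => stdGaussian E)
        {z | κ * N / ρ < |∑ i, q i ^ 2 * excess (z i)|}
      ≤ ofReal (2 * exp (-(2 * L))) := by
  obtain ⟨s, hs, hsρ, hexp⟩ := h.exists_signal_exponent
  have hsq (i : Fin N) : |s * q i ^ 2| ≤ 1 / 4 := by
    rw [abs_of_nonneg (by positivity)]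
    exact (mul_le_mul_of_nonneg_left (hq.sq_le i) hs).trans hsρ
  refine (measure_pi_lt_abs_sum_mul_excess_le hs hsq _).trans ?_
  gcongr
  exact hexp _ hE _ (by positivity) (hq.sum_sq_sq_le h.κ_le_one h.ρ_pos)

lemma NoiseRegime.measure_pi_lt_abs_inner_weightedGram_le (h : NoiseRegime N n κ ρ L)
    (hE : (Module.finrank ℝ E : ℝ) ≤ n) (hq : BalancedSignal q κ ρ) {p : E} (hp : ‖p‖ ≤ 1) :
    Measure.pi (fun _ : Fin N => stdGaussian E)
        {z | (∀ i, |rowWeight q z i| ≤ 1 / ρ + excessBound n L) ∧ κ * N / ρ < |inner ℝ p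
          (weightedGram Finset.univ (rowWeight q z) z (∑ i, (q i ^ 2 + 2)) p)|}
      ≤ ofReal (2 * exp (-(4 * n + 2 * L))) := by
  obtain ⟨s, hs, hsR, hexp⟩ := h.exists_quadratic_exponent
  have htail (σ : ℝ) (hσ : σ ^ 2 = s ^ 2) : Measure.pi (fun _ : Fin N => stdGaussian E)
      {z | (∀ i, σ * (q i ^ 2 + excess (z i)) ≤ 1 / 8) ∧ s * (κ * N / ρ) ≤
        σ * (∑ i, (q i ^ 2 + excess (z i)) * inner ℝ p (z i) ^ 2
          - ‖p‖ ^ 2 * ∑ i, (q i ^ 2 + 2))} ≤ ofReal (exp (-(4 * n + 2 * L))) := by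
    refine (measure_pi_quadratic_le h.one_le_n hE hp (fun i => q i ^ 2) _).trans ?_
    rw [hσ]
    gcongr
    refine hexp _ ?_
    rw [Finset.sum_add_distrib, Finset.sum_const, Finset.card_fin, nsmul_eq_mul]
    gcongr
    exact hq.sum_sq_sq_le h.κ_le_one h.ρ_pos
  rw [two_mul, ENNReal.ofReal_add (Real.exp_pos _).le (Real.exp_pos _).le]
  refine le_trans (measure_mono ?_) ((measure_union_le _ _).trans
    (add_le_add (htail s rfl) (htail (-s) (neg_sq s))))
  rintro z ⟨hw, hz⟩
  have hsw (i : Fin N) : |s * rowWeight q z i| ≤ 1 / 8 := by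
    rw [abs_mul, abs_of_pos hs]
    exact (mul_le_mul_of_nonneg_left (hw i) hs.le).trans hsR
  rw [inner_weightedGram_rowWeight_self] at hz
  rcases lt_abs.1 hz with hz | hz
  · exact .inl ⟨fun i => (le_abs_self _).trans (hsw i), by gcongr⟩
  · refine .inr ⟨fun i => ?_, ?_⟩
    · rw [neg_mul]
      exact (neg_le_abs _).trans (hsw i)
    · rw [neg_mul, ← mul_neg]
      gcongr

lemma NoiseRegime.measure_pi_lt_inner_weightedCross_le (h : NoiseRegime N n κ ρ L)
    (hq : BalancedSignal q κ ρ) {p : E} (hp : ‖p‖ ≤ 1) :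
    Measure.pi (fun _ : Fin N => stdGaussian E)
        {z | (∀ i, |rowWeight q z i| ≤ 1 / ρ + excessBound n L) ∧ κ * N / ρ / √L
          < inner ℝ p (weightedCross Finset.univ (rowWeight q z) q z)}
      ≤ ofReal (1 * exp (-(4 * n + 2 * L))) := by
  obtain ⟨s, hs, hexp⟩ := h.exists_linear_exponent
  rw [one_mul]
  refine le_trans (measure_mono ?_) ((measure_pi_linear_le hs hp q (κ * N / ρ / √L)).trans
    (ENNReal.ofReal_le_ofReal (Real.exp_le_exp.2 (hexp _ (hq.sum_sq_le h.κ_le_one)))))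
  rintro z ⟨hw, hz⟩
  rw [inner_weightedCross] at hz
  exact ⟨hw, hz.le⟩

lemma measure_pi_exists_lt_abs_inner_leaveOneOutKrylov_le (hL : 0 < L) (hN : N ≤ exp L)
    (q : Fin N → ℝ) (c : ℝ) :
    Measure.pi (fun _ : Fin N => stdGaussian E) {z | ∃ i, ∃ m < N,
        4 * √L * ‖leaveOneOutKrylov (rowWeight q z) q z c i m‖
          < |inner ℝ (z i) (leaveOneOutKrylov (rowWeight q z) q z c i m)|}
      ≤ ofReal (2 * exp (-(2 * L))) :=
  calc _ ≤ Fintype.card (Fin N) * (N * ofReal (2 * exp (-((4 * √L) ^ 2 / 2)))) :=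
        measure_pi_exists_lt_abs_inner_le (by positivity) N
          (continuous_leaveOneOutKrylov q c) (leaveOneOutKrylov_update q c)
    _ = ofReal (2 * ((N : ℝ) ^ 2 * exp (-(8 * L)))) := by
        rw [Fintype.card_fin, ← ENNReal.ofReal_natCast, ← ENNReal.ofReal_mul N.cast_nonneg,
          ← ENNReal.ofReal_mul N.cast_nonneg, mul_pow, Real.sq_sqrt hL.le]
        ring_nf
    _ ≤ ofReal (2 * (exp L ^ 2 * exp (-(8 * L)))) := by gcongr
    _ ≤ _ := by
        rw [← Real.exp_nat_mul, ← Real.exp_add]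
        gcongr
        push_cast
        linarith

lemma NoiseRegime.measure_pi_not_noiseEvent_le (h : NoiseRegime N n κ ρ L) (hN : N ≤ exp L)
    (hE : (Module.finrank ℝ E : ℝ) ≤ n) (hq : BalancedSignal q κ ρ) :
    Measure.pi (fun _ : Fin N => stdGaussian E) {z | ¬ NoiseEvent q (κ * N / ρ) L z}
      ≤ ofReal (12 * exp (-(2 * L))) := by
  obtain ⟨P, hPcard, hPnorm, hP⟩ := exists_finset_isCover_closedBall E
  have hcard : P.card ≤ 2 * 25 ^ Module.finrank ℝ E := hPcard.trans
    ((Nat.pow_le_pow_left (by norm_num) _).trans (Nat.le_mul_of_pos_left _ two_pos))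
  have hcard' : (polarizationVectors P).card ≤ 2 * 25 ^ Module.finrank ℝ E :=
    calc _ ≤ 2 * (5 ^ Module.finrank ℝ E) ^ 2 :=
          card_polarizationVectors_le.trans (by gcongr)
      _ = _ := by rw [← pow_mul, mul_comm _ 2, pow_mul]; norm_num
  have hexcess := measure_pi_exists_excessBound_lt_le h.n_pos hE h.L_pos hN
  have hsignal := h.measure_pi_lt_abs_signal_le hE hq
  have hgram := measure_exists_mem_finset_le hcard' hE zero_le_two fun p hp =>
    h.measure_pi_lt_abs_inner_weightedGram_le hE hq (norm_le_of_mem_polarizationVectors hPnorm hp)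
  have hcross := measure_exists_mem_finset_le hcard hE zero_le_one fun p hp =>
    h.measure_pi_lt_inner_weightedCross_le hq (hPnorm p hp)
  have hkrylov := measure_pi_exists_lt_abs_inner_leaveOneOutKrylov_le (E := E) h.L_pos hN q (3 * N)
  refine le_trans (measure_mono fun z hz => ?_) ((measure_union_le _ _).trans (add_le_add
    ((measure_union_le _ _).trans (add_le_add ((measure_union_le _ _).trans (add_le_add
      ((measure_union_le _ _).trans (add_le_add hexcess hsignal)) hgram)) hcross)) hkrylov)
    |>.trans_eq ?_)
  · contrapose! hz
    simp only [Set.mem_union, Set.mem_ofPred_eq, not_or, not_exists, not_and, not_lt] at hz ⊢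
    obtain ⟨⟨⟨⟨hexcess, hsignal⟩, hgram⟩, hcross⟩, hkrylov⟩ := hz
    have hw (i : Fin N) := hq.abs_rowWeight_le (hexcess i)
    exact not_not.2 (h.noiseEvent hE hq hP hexcess hsignal (fun p hp => hgram p hp hw)
      (fun p hp => hcross p hp hw) hkrylov)
  · iterate 4 rw [← ENNReal.ofReal_add (by positivity) (by positivity)]
    congr 1
    ring

end NoiseProbability

section Smallness

variable {N n κ ρ L A c : ℝ}

lemma mul_excessBound_le (hn : 0 ≤ n) (hρ : 0 ≤ ρ) (hρ1 : ρ ≤ 1) (hL : 1 ≤ L)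
    (hdim : n * L ^ 2 ≤ A) (hsignal : (n * ρ * L) ^ 2 ≤ A) (hlog : L ^ 4 ≤ A) :
    L * (n + L) * (1 + ρ * excessBound n L) ^ 2 ≤ 4100 * A := by
  have hsq : (1 + ρ * excessBound n L) ^ 2 ≤ 2 + ρ ^ 2 * (1024 * (L * (n + L))) := by
    have : ρ ^ 2 * excessBound n L ^ 2 ≤ ρ ^ 2 * (512 * (L * (n + L))) := by
      gcongr
      exact excessBound_sq_le hn (by linarith)
    nlinarith [sq_nonneg (1 - ρ * excessBound n L)]
  have : L * n ≤ n * L ^ 2 := by nlinarith [mul_nonneg hn (by linarith : 0 ≤ L)]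
  have : L ^ 2 ≤ L ^ 4 := pow_le_pow_right₀ hL (by norm_num)
  have : ρ ^ 2 * L ^ 4 ≤ L ^ 4 :=
    mul_le_of_le_one_left (by positivity) (pow_le_one₀ hρ hρ1)
  calc L * (n + L) * (1 + ρ * excessBound n L) ^ 2
      ≤ L * (n + L) * (2 + ρ ^ 2 * (1024 * (L * (n + L)))) := by gcongr
    _ = 2 * (L * n) + 2 * L ^ 2 + 1024 * (ρ ^ 2 * L ^ 2) * (n + L) ^ 2 := by ring
    _ ≤ 2 * (L * n) + 2 * L ^ 2 + 1024 * (ρ ^ 2 * L ^ 2) * (2 * (n ^ 2 + L ^ 2)) := by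
        gcongr
        exact add_sq_le
    _ = 2 * (L * n) + 2 * L ^ 2 + 2048 * (n * ρ * L) ^ 2 + 2048 * (ρ ^ 2 * L ^ 4) := by ring
    _ ≤ 4100 * A := by linarith

lemma add_mul_mul_sq_le (hn : 0 ≤ n) (hρ : 0 ≤ ρ) (hρ1 : ρ ≤ 1) (hL : 1 ≤ L) :
    (n + L) * (n * ρ ^ 2) ≤ (n * ρ * L) ^ 2 + n * ρ * L := by
  have : (n * ρ) ^ 2 ≤ (n * ρ * L) ^ 2 :=
    pow_le_pow_left₀ (by positivity) (le_mul_of_one_le_right (by positivity) hL) 2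
  have : ρ * (n * ρ * L) ≤ n * ρ * L := mul_le_of_le_one_left (by positivity) hρ1
  linarith

lemma pow_four_le_of_pow_seven_le (hL : 1 ≤ L) (hcL : 1 ≤ c ^ 2 * L) (hL7 : L ^ 7 ≤ N) :
    L ^ 4 ≤ c ^ 2 * N :=
  calc L ^ 4 ≤ L ^ 4 * (c ^ 2 * L) := le_mul_of_one_le_right (by positivity) hcL
    _ = c ^ 2 * L ^ 5 := by ring
    _ ≤ c ^ 2 * L ^ 7 := by
        gcongr
        norm_num
    _ ≤ c ^ 2 * N := by gcongr

lemma mul_le_of_add_sqrt_mul_le (hN : 0 < N) (hL : 0 ≤ L)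
    (h : (n * ρ / √N + √(n / N)) * L ≤ c) : n * ρ * L ≤ c * √N := by
  have : n * ρ / √N * L ≤ c := by linarith [mul_nonneg (Real.sqrt_nonneg (n / N)) hL]
  rwa [div_mul_eq_mul_div, div_le_iff₀ (Real.sqrt_pos.2 hN)] at this

lemma mul_sq_le_of_add_sqrt_mul_le (hN : 0 < N) (hn : 0 ≤ n) (hρ : 0 ≤ ρ) (hL : 0 ≤ L)
    (h : (n * ρ / √N + √(n / N)) * L ≤ c) : n * L ^ 2 ≤ c ^ 2 * N := by
  have hc : √(n / N) * L ≤ c := by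
    have : 0 ≤ n * ρ / √N * L := by positivity
    linarith
  have hsq : (√(n / N) * L) ^ 2 ≤ c ^ 2 := by gcongr
  rwa [mul_pow, Real.sq_sqrt (by positivity), div_mul_eq_mul_div, div_le_iff₀ hN] at hsq

lemma NoiseRegime.of_small (hκ : 0 < κ) (hκ1 : κ ≤ 1) (hρ : 0 < ρ) (hρ1 : ρ ≤ 1) (hn : 1 ≤ n)
    (hL : 1 ≤ L) (hρN : 1 ≤ ρ * N) (hc : 10 ^ 8 * (4100 * c) = κ ^ 2) (hcL : 1 ≤ c ^ 2 * L)
    (hL7 : L ^ 7 ≤ N) (hsmall : (n * ρ / √N + √(n / N)) * L ≤ c) : NoiseRegime N n κ ρ L := by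
  have hN1 : 1 ≤ N := (one_le_pow₀ hL).trans hL7
  have hN : 0 < N := by linarith
  have hc0 : 0 < c := by linarith [pow_pos hκ 2]
  have hsqrt := mul_le_of_add_sqrt_mul_le hN (by linarith) hsmall
  have hsq : (n * ρ * L) ^ 2 ≤ c ^ 2 * N := by
    calc _ ≤ (c * √N) ^ 2 := by gcongr
      _ = _ := by rw [mul_pow, Real.sq_sqrt hN.le]
  have hcN : c ^ 2 * N ≤ c * N := by
    have : c ≤ 1 := by linarith [pow_le_one₀ (n := 2) hκ.le hκ1]
    gcongr
    exact pow_le_of_le_one hc0.le this two_ne_zero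
  have hlin : n * ρ * L ≤ c * N := hsqrt.trans (by
    gcongr
    exact (Real.sqrt_le_left hN.le).2 (by nlinarith))
  have hκN : κ ^ 2 * N = 10 ^ 8 * (4100 * (c * N)) := by rw [← hc]; ring
  refine ⟨hκ, hκ1, hρ, hρ1, hn, hL, hρN, ?_, ?_, ?_⟩
  · have := mul_excessBound_le (by linarith) hρ.le hρ1 hL
      (mul_sq_le_of_add_sqrt_mul_le hN (by linarith) hρ.le (by linarith) hsmall) hsq
      (pow_four_le_of_pow_seven_le hL hcL hL7)
    linarith
  · have := add_mul_mul_sq_le (by linarith : 0 ≤ n) hρ.le hρ1 hL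
    have : 0 < c * N := by positivity
    linarith
  · have : 0 < c * N := by positivity
    linarith

end Smallness

/-! ### Recovery of a Bernoulli–Rademacher vector -/

section BernoulliRademacher

variable {N : ℕ} {κ ρ δ s : ℝ} {v : Fin N → ℝ}

lemma isProbabilityMeasure_brMeasure (N : ℕ) (hρ : 0 ≤ ρ) (hρ1 : ρ ≤ 1) :
    IsProbabilityMeasure (brMeasure N ρ) := by
  constructor
  have h : (1 - ρ).toNNReal + (ρ / 2).toNNReal + (ρ / 2).toNNReal = 1 := by
    rw [← Real.toNNReal_add (by linarith) (by linarith),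
      ← Real.toNNReal_add (by linarith) (by linarith), ← Real.toNNReal_one]
    congr 1
    ring
  simp only [brMeasure, Measure.add_apply, Measure.smul_apply, measure_univ, ENNReal.smul_def,
    smul_eq_mul, mul_one]
  exact_mod_cast h

lemma isProbabilityMeasure_brVec (N : ℕ) (hρ : 0 ≤ ρ) (hρ1 : ρ ≤ 1) :
    IsProbabilityMeasure (brVec N ρ) := by
  have := isProbabilityMeasure_brMeasure N hρ hρ1
  unfold brVec
  infer_instance

lemma ae_brMeasure (N : ℕ) (ρ : ℝ) :
    ∀ᵐ x ∂brMeasure N ρ, x = 0 ∨ x = (√(N * ρ))⁻¹ ∨ x = -(√(N * ρ))⁻¹ := by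
  have hatom (p : ℝ → Prop) (c : NNReal) (x : ℝ) (hx : p x) : ∀ᵐ y ∂(c • Measure.dirac x), p y :=
    Measure.ae_smul_measure ((ae_dirac_eq x).symm ▸ hx) c
  simp only [brMeasure, ae_add_measure_iff]
  exact ⟨⟨hatom _ _ _ (by simp), hatom _ _ _ (by simp)⟩, hatom _ _ _ (by simp)⟩

lemma lintegral_brMeasure (N : ℕ) (ρ : ℝ) (f : ℝ → ENNReal) :
    ∫⁻ x, f x ∂brMeasure N ρ = ofReal (1 - ρ) * f 0 + ofReal (ρ / 2) * f (√(N * ρ))⁻¹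
      + ofReal (ρ / 2) * f (-(√(N * ρ))⁻¹) := by
  simp only [brMeasure, lintegral_add_measure, lintegral_smul_measure, lintegral_dirac]
  rfl

lemma one_sub_add_mul_exp_le (hρ : 0 ≤ ρ) (hs : |s| ≤ 1) :
    1 - ρ + ρ * exp s ≤ exp (ρ * (s + s ^ 2)) :=
  calc _ ≤ ρ * (s + s ^ 2) + 1 := by
        nlinarith [(abs_le.1 (Real.abs_exp_sub_one_sub_id_le hs)).2]
    _ ≤ _ := Real.add_one_le_exp _

lemma lintegral_exp_brMeasure_le (hN : 0 < N) (hρ : 0 < ρ) (hρ1 : ρ ≤ 1) (hs : |s| ≤ 1) :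
    ∫⁻ x, ofReal (exp (s * (x ^ 2 * (N * ρ) - ρ))) ∂brMeasure N ρ
      ≤ ofReal (exp (ρ * s ^ 2)) := by
  have hNρ : 0 < N * ρ := by positivity
  have hatom : (√(N * ρ))⁻¹ ^ 2 * (N * ρ) = 1 := by
    rw [inv_pow, Real.sq_sqrt hNρ.le, inv_mul_cancel₀ hNρ.ne']
  have : 0 ≤ 1 - ρ := by linarith
  simp only [lintegral_brMeasure, neg_sq, hatom]
  rw [← ENNReal.ofReal_mul (by positivity), ← ENNReal.ofReal_mul (by positivity),
    ← ENNReal.ofReal_add (by positivity) (by positivity),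
    ← ENNReal.ofReal_add (by positivity) (by positivity)]
  apply ENNReal.ofReal_le_ofReal
  have hzero : exp (s * (0 ^ 2 * (N * ρ) - ρ)) = exp (-(s * ρ)) := by
    congr 1
    ring
  have hone : exp (s * (1 - ρ)) = exp (-(s * ρ)) * exp s := by
    rw [← Real.exp_add]
    congr 1
    ring
  rw [hzero, hone]
  calc _ = exp (-(s * ρ)) * (1 - ρ + ρ * exp s) := by ring
    _ ≤ exp (-(s * ρ)) * exp (ρ * (s + s ^ 2)) := by
        gcongr
        exact one_sub_add_mul_exp_le hρ.le hs
    _ = _ := by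
        rw [← Real.exp_add]
        congr 1
        ring

lemma brVec_lt_abs_sum_le (hN : 0 < N) (hρ : 0 < ρ) (hρ1 : ρ ≤ 1) (hκ : 0 ≤ κ) (hκ1 : κ ≤ 1) :
    brVec N ρ {v | κ * (N * ρ) < |∑ i, (v i ^ 2 * (N * ρ) - ρ)|}
      ≤ ofReal (2 * exp (-(κ ^ 2 * (N * ρ) / 4))) := by
  have := isProbabilityMeasure_brMeasure N hρ.le hρ1
  have hs : |κ / 2| ≤ 1 := abs_le.2 ⟨by linarith, by linarith⟩
  refine (measure_pi_lt_abs_sum_le (μ := fun _ : Fin N => brMeasure N ρ)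
    (f := fun _ x => x ^ 2 * (N * ρ) - ρ) (a := fun _ => ρ * (κ / 2) ^ 2) (fun _ => by fun_prop)
    (by positivity) (fun _ => lintegral_exp_brMeasure_le hN hρ hρ1 hs) (fun _ => ?_) _).trans_eq ?_
  · rw [← neg_sq (κ / 2)]
    exact lintegral_exp_brMeasure_le hN hρ hρ1 (by rwa [abs_neg])
  · rw [Finset.sum_const, Finset.card_univ, Fintype.card_fin, nsmul_eq_mul]
    congr 3
    ring

/-- A vector with the entries of a Bernoulli–Rademacher vector of sparsity `ρ`, whose support has
the expected size up to a factor `1 ± κ`. -/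
structure IsTypical (v : Fin N → ℝ) (κ ρ : ℝ) : Prop where
  eq_or_eq_or_eq (i : Fin N) : v i = 0 ∨ v i = (√(N * ρ))⁻¹ ∨ v i = -(√(N * ρ))⁻¹
  abs_sum_le : |∑ i, (v i ^ 2 * (N * ρ) - ρ)| ≤ κ * (N * ρ)

lemma brVec_not_isTypical_le (hN : 0 < N) (hρ : 0 < ρ) (hρ1 : ρ ≤ 1) (hκ : 0 ≤ κ) (hκ1 : κ ≤ 1)
    (hδ : 0 < δ) (hδ2 : δ ≤ 1 / 2) (h : 12 * log (1 / δ) ≤ κ ^ 2 * (N * ρ)) :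
    brVec N ρ {v | ¬ IsTypical v κ ρ} ≤ ofReal (δ / 2) := by
  have := isProbabilityMeasure_brMeasure N hρ.le hρ1
  have hentries :
      brVec N ρ {v | ¬ ∀ i, v i = 0 ∨ v i = (√(N * ρ))⁻¹ ∨ v i = -(√(N * ρ))⁻¹} = 0 := by
    rw [← ae_iff, ae_all_iff]
    exact fun i => (measurePreserving_eval (fun _ : Fin N => brMeasure N ρ)
      i).quasiMeasurePreserving.ae (ae_brMeasure N ρ)
  have hexp : exp (-(κ ^ 2 * (N * ρ) / 4)) ≤ δ / 4 := by
    calc _ ≤ exp (3 * log δ) := by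
          rw [one_div, Real.log_inv] at h
          gcongr
          linarith
      _ = δ * δ ^ 2 := by
          rw [show (3 : ℝ) = (3 : ℕ) by norm_num, Real.exp_nat_mul, Real.exp_log hδ]
          ring
      _ ≤ δ * (1 / 2) ^ 2 := by gcongr
      _ = δ / 4 := by ring
  have hsum : brVec N ρ {v | κ * (N * ρ) < |∑ i, (v i ^ 2 * (N * ρ) - ρ)|} ≤ ofReal (δ / 2) :=
    (brVec_lt_abs_sum_le hN hρ hρ1 hκ hκ1).trans (ENNReal.ofReal_le_ofReal (by linarith))
  refine le_trans (measure_mono fun v hv => ?_)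
    ((measure_union_le _ _).trans ((add_le_add hentries.le hsum).trans_eq (zero_add _)))
  by_contra hcon
  rw [Set.mem_union, not_or, Set.mem_ofPred_eq, Set.mem_ofPred_eq, not_not, not_lt] at hcon
  exact hv ⟨hcon.1, hcon.2⟩

namespace IsTypical

lemma sq_eq_zero_or_eq (h : IsTypical v κ ρ) (i : Fin N) (hNρ : 0 ≤ N * ρ) :
    v i ^ 2 = 0 ∨ v i ^ 2 = (N * ρ)⁻¹ := by
  rcases h.eq_or_eq_or_eq i with hi | hi | hi
  · simp [hi]
  · simp only [hi, inv_pow, Real.sq_sqrt hNρ, or_true]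
  · simp only [hi, neg_sq, inv_pow, Real.sq_sqrt hNρ, or_true]

lemma balancedSignal (h : IsTypical v κ ρ) (hN : 0 < N) (hρ : 0 < ρ) :
    BalancedSignal (fun i => √N * v i) κ ρ where
  sq_le i := by
    rw [mul_pow, Real.sq_sqrt N.cast_nonneg]
    rcases h.sq_eq_zero_or_eq i (by positivity) with hi | hi
    · rw [hi, mul_zero]
      positivity
    · rw [hi]
      apply le_of_eq
      field_simp
  abs_sum_sub_le := by
    have hscale : ∑ i, (v i ^ 2 * (N * ρ) - ρ) = ρ * (∑ i, (√N * v i) ^ 2 - N) := by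
      simp only [mul_pow, Real.sq_sqrt N.cast_nonneg]
      rw [Finset.sum_sub_distrib, ← Finset.sum_mul, ← Finset.mul_sum, Finset.sum_const,
        Finset.card_univ, Fintype.card_fin, nsmul_eq_mul]
      ring
    have habs := h.abs_sum_le
    rw [hscale, abs_mul, abs_of_pos hρ] at habs
    exact le_of_mul_le_mul_left (habs.trans_eq (by ring)) hρ

lemma sum_sq_sq_eq (h : IsTypical v κ ρ) (hN : 0 < N) (hρ : 0 < ρ) :
    ∑ i, ((√N * v i) ^ 2) ^ 2 = (∑ i, (√N * v i) ^ 2) / ρ := by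
  rw [Finset.sum_div]
  refine Finset.sum_congr rfl fun i _ => ?_
  rw [mul_pow, Real.sq_sqrt N.cast_nonneg]
  rcases h.sq_eq_zero_or_eq i (by positivity) with hi | hi
  · simp [hi]
  · rw [hi]
    field_simp

end IsTypical

end BernoulliRademacher

lemma mul_sign_mul_indicator_eq {a x y s : ℝ} (ha : 0 < a) (hx : x = 0 ∨ x = a ∨ x = -a)
    (hs : s = 1 ∨ s = -1) (h : |y - s * x| < a / 2) :
    a * Real.sign (s * y) * Set.indicator {t : ℝ | 0.5 * a ≤ |t|} 1 y = x := by
  have habs : |y| = |s * y| := by rcases hs with rfl | rfl <;> simp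
  have hclose : |s * y - x| < a / 2 := by
    rcases hs with rfl | rfl
    · simpa using h
    · rw [abs_sub_comm] at h
      convert h using 2
      ring
  obtain ⟨hlower, hupper⟩ := abs_lt.1 hclose
  simp only [Set.indicator_apply, Set.mem_ofPred_eq, habs, Pi.one_apply]
  norm_num only
  rcases hx with rfl | rfl | rfl
  · rw [if_neg (not_le.2 (abs_lt.2 ⟨by linarith, by linarith⟩)), mul_zero]
  · rw [if_pos (le_abs.2 (.inl (by linarith))), Real.sign_of_pos (by linarith), mul_one, mul_one]
  · rw [if_pos (le_abs.2 (.inr (by linarith))), Real.sign_of_neg (by linarith), mul_one,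
      mul_neg_one]

section SpectralMatrix

variable {N n m : ℕ}

lemma eucNorm_eq_sqrt_dotProduct (x : Fin n → ℝ) : eucNorm x = √(x ⬝ᵥ x) := by
  simp only [eucNorm, dotProduct, sq]

lemma specMat_mulVec (Y : Matrix (Fin N) (Fin n) ℝ) (x : Fin n → ℝ) :
    specMat Y *ᵥ x
      = ∑ i, ((Y i ⬝ᵥ Y i - ((n : ℝ) - 1) / N) * (Y i ⬝ᵥ x)) • Y i - ((3 : ℝ) / N) • x := by
  rw [specMat, sub_mulVec, sum_mulVec, smul_mulVec, one_mulVec]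
  congr 1
  refine Finset.sum_congr rfl fun i _ => ?_
  rw [smul_mulVec, vecMulVec_mulVec, op_smul_eq_smul, smul_smul]
  simp only [dotProduct, sq]

lemma specMat_isHermitian (Y : Matrix (Fin N) (Fin n) ℝ) : (specMat Y).IsHermitian := by
  ext j k
  simp only [specMat, conjTranspose_apply, star_trivial, Matrix.sub_apply, Matrix.sum_apply,
    Matrix.smul_apply, vecMulVec_apply, Matrix.one_apply, eq_comm (a := k) (b := j),
    mul_comm (Y _ k)]

lemma mulVec_specMat_mul_mulVec (Y : Matrix (Fin N) (Fin n) ℝ) {Q : Matrix (Fin n) (Fin n) ℝ}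
    (hQ : Qᵀ * Q = 1) (x : Fin n → ℝ) :
    Q *ᵥ (specMat (Y * Q) *ᵥ x) = specMat Y *ᵥ (Q *ᵥ x) := by
  have hrow (i) : Q *ᵥ ((Y * Q) i) = Y i := by
    rw [mul_apply_eq_vecMul, ← mulVec_transpose, mulVec_mulVec, mul_eq_one_comm.1 hQ, one_mulVec]
  have hdot (i y) : (Y * Q) i ⬝ᵥ y = Y i ⬝ᵥ (Q *ᵥ y) := by
    rw [mul_apply_eq_vecMul, dotProduct_mulVec]
  rw [specMat_mulVec, specMat_mulVec, mulVec_sub, mulVec_sum, mulVec_smul]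
  simp only [mulVec_smul, hdot, hrow]

lemma isLeadingEigen_mulVec {Y : Matrix (Fin N) (Fin n) ℝ} {Q : Matrix (Fin n) (Fin n) ℝ}
    (hQ : Qᵀ * Q = 1) {u : Fin n → ℝ} (hu : IsLeadingEigen (specMat (Y * Q)) u) :
    IsLeadingEigen (specMat Y) (Q *ᵥ u) := by
  have hQ' : Q * Qᵀ = 1 := mul_eq_one_comm.1 hQ
  obtain ⟨hnorm, μ, hμ, hmax⟩ := hu
  refine ⟨?_, μ, ?_, fun μ' ⟨w, hw0, hw⟩ => hmax μ' ⟨Qᵀ *ᵥ w, fun h => hw0 ?_, ?_⟩⟩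
  · rw [eucNorm_eq_sqrt_dotProduct] at hnorm ⊢
    rw [dotProduct_mulVec, ← mulVec_transpose, mulVec_mulVec, hQ, one_mulVec, hnorm]
  · rw [← mulVec_specMat_mul_mulVec Y hQ, hμ, mulVec_smul]
  · rw [← one_mulVec w, ← hQ', ← mulVec_mulVec, h, mulVec_zero]
  · have hconj := mulVec_specMat_mul_mulVec Y hQ (Qᵀ *ᵥ w)
    rw [mulVec_mulVec w Q, hQ', one_mulVec, hw] at hconj
    rw [← one_mulVec (specMat (Y * Q) *ᵥ (Qᵀ *ᵥ w)), ← hQ, ← mulVec_mulVec, hconj, mulVec_smul]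

lemma apply_self_eq_sum_eigenvalues_mul {ι : Type*} [Fintype ι] [DecidableEq ι]
    {M : Matrix ι ι ℝ} (hM : M.IsHermitian) (i : ι) :
    M i i = ∑ k, hM.eigenvalues k * (hM.eigenvectorUnitary : Matrix ι ι ℝ) i k ^ 2 := by
  have h := congrFun₂ hM.spectral_theorem i i
  rw [h, Unitary.conjStarAlgAut_apply, Matrix.mul_apply]
  refine Finset.sum_congr rfl fun k _ => ?_
  rw [mul_diagonal, star_apply]
  simp only [Function.comp_apply, RCLike.ofReal_real_eq_id, id_eq, star_trivial]
  ring

lemma abs_apply_self_le_of_abs_eigenvalue_le {ι : Type*} [Fintype ι]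
    {M : Matrix ι ι ℝ} (hM : M.IsHermitian) {b : ℝ}
    (h : ∀ μ : ℝ, (∃ w : ι → ℝ, w ≠ 0 ∧ M *ᵥ w = μ • w) → |μ| ≤ b) (i : ι) :
    |M i i| ≤ b := by
  classical
  have heigenvalue (k) : |hM.eigenvalues k| ≤ b :=
    h _ ⟨hM.eigenvectorBasis k, (WithLp.ofLp_eq_zero 2).not.2
      (hM.eigenvectorBasis.orthonormal.ne_zero k), hM.mulVec_eigenvectorBasis k⟩
  have hrow : ∑ k, (hM.eigenvectorUnitary : Matrix ι ι ℝ) i k ^ 2 = 1 := by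
    have hU : (hM.eigenvectorUnitary : Matrix ι ι ℝ) * star (hM.eigenvectorUnitary : Matrix ι ι ℝ)
      = 1 := Unitary.coe_mul_star_self hM.eigenvectorUnitary
    have hUi := congrFun₂ hU i i
    rw [Matrix.mul_apply, one_apply_eq] at hUi
    simpa only [star_apply, star_trivial, ← sq] using hUi
  rw [apply_self_eq_sum_eigenvalues_mul hM]
  calc _ ≤ ∑ k, |hM.eigenvalues k| * (hM.eigenvectorUnitary : Matrix ι ι ℝ) i k ^ 2 :=
        (Finset.abs_sum_le_sum_abs _ _).trans_eq (by simp only [abs_mul, abs_pow, sq_abs])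
    _ ≤ ∑ k, b * (hM.eigenvectorUnitary : Matrix ι ι ℝ) i k ^ 2 := by
        gcongr with k
        exact heigenvalue k
    _ = b := by rw [← Finset.mul_sum, hrow, mul_one]

end SpectralMatrix

section ScaledRows

variable {N m : ℕ}

/-- The Gaussian coordinates of the rows, rescaled to unit variance. -/
noncomputable def scaledRows (B : Fin N → Fin m → ℝ) (i : Fin N) : EuclideanSpace ℝ (Fin m) :=
  WithLp.toLp 2 (√N • B i)

lemma norm_scaledRows_sq (B : Fin N → Fin m → ℝ) (i : Fin N) :
    ‖scaledRows B i‖ ^ 2 = N * (B i ⬝ᵥ B i) := by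
  rw [scaledRows, WithLp.toLp_smul, norm_smul, mul_pow, Real.norm_eq_abs, sq_abs,
    Real.sq_sqrt N.cast_nonneg, EuclideanSpace.real_norm_sq_eq]
  simp only [dotProduct, sq]

lemma inner_scaledRows (B : Fin N → Fin m → ℝ) (i : Fin N) (x : Fin m → ℝ) :
    inner ℝ (scaledRows B i) (WithLp.toLp 2 x) = √N * (B i ⬝ᵥ x) := by
  rw [scaledRows, EuclideanSpace.inner_toLp_toLp, star_trivial, dotProduct_smul, smul_eq_mul,
    dotProduct_comm]

lemma gaussBasis_dotProduct (v : Fin N → ℝ) (B : Fin N → Fin m → ℝ) (i : Fin N)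
    (x : Fin (m + 1) → ℝ) :
    gaussBasis (n := m + 1) v B i ⬝ᵥ x = v i * x 0 + B i ⬝ᵥ Fin.tail x := by
  rw [dotProduct, Fin.sum_univ_succ]
  rfl

lemma sqrt_mul_gaussBasis_dotProduct (v : Fin N → ℝ) (B : Fin N → Fin m → ℝ) (i : Fin N)
    (x : Fin (m + 1) → ℝ) :
    √N * (gaussBasis (n := m + 1) v B i ⬝ᵥ x)
      = √N * v i * x 0 + inner ℝ (scaledRows B i) (WithLp.toLp 2 (Fin.tail x)) := by
  rw [gaussBasis_dotProduct, inner_scaledRows]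
  ring

lemma mul_gaussBasis_dotProduct_self_sub (hN : 0 < N) (v : Fin N → ℝ) (B : Fin N → Fin m → ℝ)
    (i : Fin N) :
    N * (gaussBasis (n := m + 1) v B i ⬝ᵥ gaussBasis (n := m + 1) v B i
      - (((m + 1 : ℕ) : ℝ) - 1) / N) = rowWeight (fun i => √N * v i) (scaledRows B) i := by
  have hhead : gaussBasis (n := m + 1) v B i 0 = v i := rfl
  have htail : Fin.tail (gaussBasis (n := m + 1) v B i) = B i := rfl
  rw [gaussBasis_dotProduct, rowWeight, excess, norm_scaledRows_sq, finrank_euclideanSpace,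
    Fintype.card_fin, mul_pow, Real.sq_sqrt N.cast_nonneg, hhead, htail]
  push_cast
  field_simp
  ring

lemma sq_mul_specMat_mulVec_apply (hN : 0 < N) (v : Fin N → ℝ) (B : Fin N → Fin m → ℝ)
    (x : Fin (m + 1) → ℝ) (j : Fin (m + 1)) :
    (N : ℝ) ^ 2 * (specMat (gaussBasis v B) *ᵥ x) j
      = ∑ i, rowWeight (fun i => √N * v i) (scaledRows B) i
          * (√N * v i * x 0 + inner ℝ (scaledRows B i) (WithLp.toLp 2 (Fin.tail x)))
          * (√N * gaussBasis (n := m + 1) v B i j) - 3 * N * x j := by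
  rw [specMat_mulVec, Pi.sub_apply, Finset.sum_apply, mul_sub, Finset.mul_sum]
  congr 1
  · refine Finset.sum_congr rfl fun i _ => ?_
    rw [← mul_gaussBasis_dotProduct_self_sub hN, ← sqrt_mul_gaussBasis_dotProduct, Pi.smul_apply,
      smul_eq_mul]
    have hsqrt : √(N : ℝ) * √N = N := Real.mul_self_sqrt N.cast_nonneg
    linear_combination (N * (gaussBasis (n := m + 1) v B i ⬝ᵥ gaussBasis (n := m + 1) v B i
      - (((m + 1 : ℕ) : ℝ) - 1) / N) * (gaussBasis (n := m + 1) v B i ⬝ᵥ x)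
      * gaussBasis (n := m + 1) v B i j) * (-hsqrt)
  · rw [Pi.smul_apply, smul_eq_mul]
    field_simp

lemma sq_mul_specMat_zero_zero (hN : 0 < N) (v : Fin N → ℝ) (B : Fin N → Fin m → ℝ) :
    (N : ℝ) ^ 2 * specMat (gaussBasis (n := m + 1) v B) 0 0
      = ∑ i, rowWeight (fun i => √N * v i) (scaledRows B) i * (√N * v i) ^ 2 - 3 * N := by
  have hhead (i) : gaussBasis (n := m + 1) v B i 0 = v i := rfl
  have htail : Fin.tail (Pi.single 0 1 : Fin (m + 1) → ℝ) = 0 := by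
    ext j
    simp [Fin.tail]
  rw [← col_apply (specMat _), ← mulVec_single_one, sq_mul_specMat_mulVec_apply hN]
  simp only [htail, hhead, WithLp.toLp_zero, inner_zero_right, Pi.single_eq_same, add_zero, mul_one]
  congr 1
  exact Finset.sum_congr rfl fun i _ => by ring

lemma sq_smul_tail_specMat_mulVec (hN : 0 < N) (v : Fin N → ℝ) (B : Fin N → Fin m → ℝ)
    (x : Fin (m + 1) → ℝ) :
    (N : ℝ) ^ 2 • (WithLp.toLp 2 (Fin.tail (specMat (gaussBasis v B) *ᵥ x)) :
        EuclideanSpace ℝ (Fin m))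
      = weightedGram Finset.univ (rowWeight (fun i => √N * v i) (scaledRows B)) (scaledRows B)
          (3 * N) (WithLp.toLp 2 (Fin.tail x))
        + x 0 • weightedCross Finset.univ (rowWeight (fun i => √N * v i) (scaledRows B))
          (fun i => √N * v i) (scaledRows B) := by
  ext j
  have hentry (i) : (scaledRows B i).ofLp j = √N * gaussBasis (n := m + 1) v B i j.succ := rfl
  rw [weightedGram_apply, weightedCross]
  simp only [PiLp.add_apply, PiLp.sub_apply, PiLp.smul_apply, smul_eq_mul, WithLp.ofLp_sum,
    Finset.sum_apply, Fin.tail, hentry]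
  rw [sq_mul_specMat_mulVec_apply hN, Finset.mul_sum, sub_add_eq_add_sub, ← Finset.sum_add_distrib]
  congr 1
  refine Finset.sum_congr rfl fun i _ => ?_
  rw [Fin.tail_def]
  ring

end ScaledRows

section Recovery

lemma BalancedSignal.le_abs_sum_rowWeight_mul_sq {E : Type*} [NormedAddCommGroup E]
    [InnerProductSpace ℝ E] {N : ℕ} {κ ρ : ℝ} {q : Fin N → ℝ} {z : Fin N → E}
    (hq : BalancedSignal q κ ρ) (hρ : 0 < ρ) (hκ : 0 ≤ κ)
    (hfourth : ∑ i, (q i ^ 2) ^ 2 = (∑ i, q i ^ 2) / ρ)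
    (hsignal : |∑ i, q i ^ 2 * excess (z i)| ≤ κ * N / ρ) (hgap : 100 * κ ≤ |ρ - 1 / 3|) :
    200 * (κ * N / ρ) ≤ |∑ i, rowWeight q z i * q i ^ 2 - 3 * N| := by
  have hsplit : ∑ i, rowWeight q z i * q i ^ 2 - 3 * N
      = (∑ i, q i ^ 2 - N) / ρ + ∑ i, q i ^ 2 * excess (z i) - 3 * (N / ρ) * (ρ - 1 / 3) := by
    have : ∑ i, rowWeight q z i * q i ^ 2
        = ∑ i, (q i ^ 2) ^ 2 + ∑ i, q i ^ 2 * excess (z i) := by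
      rw [← Finset.sum_add_distrib]
      exact Finset.sum_congr rfl fun i _ => by
        rw [rowWeight]
        ring
    rw [this, hfourth]
    field_simp
    ring
  have hnorm : |(∑ i, q i ^ 2 - N) / ρ| ≤ κ * N / ρ := by
    rw [abs_div, abs_of_pos hρ]
    gcongr
    exact hq.abs_sum_sub_le
  have hmain : 300 * (κ * N / ρ) ≤ |3 * (N / ρ) * (ρ - 1 / 3)| := by
    rw [abs_mul, abs_of_nonneg (show 0 ≤ 3 * (N / ρ) by positivity)]
    calc 300 * (κ * N / ρ) = 3 * (N / ρ) * (100 * κ) := by ring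
      _ ≤ _ := by gcongr
  have : 0 ≤ κ * N / ρ := by positivity
  have := abs_sub_abs_le_abs_sub (3 * (N / ρ) * (ρ - 1 / 3))
    ((∑ i, q i ^ 2 - N) / ρ + ∑ i, q i ^ 2 * excess (z i))
  have := abs_add_le ((∑ i, q i ^ 2 - N) / ρ) (∑ i, q i ^ 2 * excess (z i))
  rw [hsplit, abs_sub_comm]
  linarith

variable {N m : ℕ} {κ ρ L μ : ℝ} {v : Fin N → ℝ} {B : Fin N → Fin m → ℝ}

lemma IsTypical.le_abs_sq_mul_eigenvalue (hv : IsTypical v κ ρ) (hN : 0 < N) (hρ : 0 < ρ)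
    (hκ : 0 ≤ κ) (hgap : 100 * κ ≤ |ρ - 1 / 3|)
    (hz : NoiseEvent (fun i => √N * v i) (κ * N / ρ) L (scaledRows B))
    (hμ : ∀ μ' : ℝ, (∃ w : Fin (m + 1) → ℝ, w ≠ 0 ∧ specMat (gaussBasis v B) *ᵥ w = μ' • w) →
      |μ'| ≤ |μ|) :
    200 * (κ * N / ρ) ≤ |(N : ℝ) ^ 2 * μ| := by
  have hsignal := (hv.balancedSignal hN hρ).le_abs_sum_rowWeight_mul_sq hρ hκ
    (hv.sum_sq_sq_eq hN hρ) hz.signal hgap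
  rw [← sq_mul_specMat_zero_zero hN] at hsignal
  rw [abs_mul] at hsignal ⊢
  refine hsignal.trans (mul_le_mul_of_nonneg_left ?_ (abs_nonneg _))
  exact abs_apply_self_le_of_abs_eigenvalue_le (specMat_isHermitian _) hμ 0

lemma IsTypical.exists_sign_forall_abs_dotProduct_sub_lt (hv : IsTypical v κ ρ) (hN : 0 < N)
    (hρ : 0 < ρ) (hρ1 : ρ ≤ 1) (hκ : 0 < κ) (hL : 1 ≤ L) (hgap : 100 * κ ≤ |ρ - 1 / 3|)
    (hz : NoiseEvent (fun i => √N * v i) (κ * N / ρ) L (scaledRows B))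
    {x : Fin (m + 1) → ℝ} (hx : IsLeadingEigen (specMat (gaussBasis v B)) x) :
    ∃ s : ℝ, (s = 1 ∨ s = -1) ∧
      ∀ i, |gaussBasis (n := m + 1) v B i ⬝ᵥ x - s * v i| < (√(N * ρ))⁻¹ / 2 := by
  obtain ⟨hnorm, μ, hμ, hmax⟩ := hx
  have hnorm' : x 0 ^ 2 + ‖(WithLp.toLp 2 (Fin.tail x) : EuclideanSpace ℝ (Fin m))‖ ^ 2 = 1 := by
    rw [eucNorm, Real.sqrt_eq_one, Fin.sum_univ_succ] at hnorm
    rwa [EuclideanSpace.real_norm_sq_eq]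
  have heigen := sq_smul_tail_specMat_mulVec hN v B x
  rw [hμ, show Fin.tail (μ • x) = μ • Fin.tail x from rfl, WithLp.toLp_smul, smul_smul] at heigen
  have hq (i) : |√N * v i| ≤ (√ρ)⁻¹ := by
    rw [← Real.sqrt_inv, ← one_div]
    exact Real.abs_le_sqrt ((hv.balancedSignal hN hρ).sq_le i)
  obtain ⟨s, hs, hclose⟩ := hz.exists_sign_forall_abs_sub_lt (by positivity) hL
    (hv.le_abs_sq_mul_eigenvalue hN hρ hκ.le hgap hz hmax)
    ((one_le_inv₀ (Real.sqrt_pos.2 hρ)).2 (Real.sqrt_le_one.2 hρ1)) hq hnorm' heigen.symm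
  refine ⟨s, hs, fun i => ?_⟩
  have hsN : 0 < √(N : ℝ) := by positivity
  have hi := hclose i
  rw [← sqrt_mul_gaussBasis_dotProduct, mul_left_comm, ← mul_sub, abs_mul, abs_of_pos hsN] at hi
  refine lt_of_mul_lt_mul_left (hi.trans_eq ?_) hsN.le
  rw [Real.sqrt_mul N.cast_nonneg]
  field_simp

lemma IsTypical.exists_sign_round_eq (hv : IsTypical v κ ρ) (hN : 0 < N) (hρ : 0 < ρ)
    (hρ1 : ρ ≤ 1) (hκ : 0 < κ) (hL : 1 ≤ L) (hgap : 100 * κ ≤ |ρ - 1 / 3|)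
    (hz : NoiseEvent (fun i => √N * v i) (κ * N / ρ) L (scaledRows B))
    {Q : Matrix (Fin (m + 1)) (Fin (m + 1)) ℝ} (hQ : Qᵀ * Q = 1) {u : Fin (m + 1) → ℝ}
    (hu : IsLeadingEigen (specMat (gaussBasis (n := m + 1) v B * Q)) u) :
    ∃ s : ℝ, (s = 1 ∨ s = -1) ∧ ∀ j : Fin N,
      (√(N * ρ))⁻¹ * Real.sign (s * ((gaussBasis (n := m + 1) v B * Q) *ᵥ u) j)
        * Set.indicator {x : ℝ | 0.5 * (√(N * ρ))⁻¹ ≤ |x|} 1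
          (((gaussBasis (n := m + 1) v B * Q) *ᵥ u) j)
      = v j := by
  obtain ⟨s, hs, hclose⟩ := hv.exists_sign_forall_abs_dotProduct_sub_lt hN hρ hρ1 hκ hL hgap hz
    (isLeadingEigen_mulVec hQ hu)
  refine ⟨s, hs, fun j => mul_sign_mul_indicator_eq (by positivity) (hv.eq_or_eq_or_eq j) hs ?_⟩
  rw [← mulVec_mulVec]
  exact hclose j

end Recovery

section Probability

instance {N k : ℕ} {σ2 : NNReal} : IsProbabilityMeasure (iidGaussVec N k σ2) := by
  unfold iidGaussVec
  infer_instance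

lemma map_scaledRows_iidGaussVec {N : ℕ} (m : ℕ) (hN : 0 < N) :
    (iidGaussVec N m (N : NNReal)⁻¹).map scaledRows
      = Measure.pi fun _ : Fin N => stdGaussian (EuclideanSpace ℝ (Fin m)) := by
  have hentry : (gaussianReal 0 (N : NNReal)⁻¹).map (√N * ·) = gaussianReal 0 1 := by
    rw [gaussianReal_map_const_mul, mul_zero]
    congr 1
    ext
    push_cast
    rw [Real.sq_sqrt N.cast_nonneg, mul_inv_cancel₀ (by positivity)]
  have hrow : (gaussVec m (N : NNReal)⁻¹).map (fun b => WithLp.toLp 2 (√N • b))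
      = stdGaussian (EuclideanSpace ℝ (Fin m)) := by
    have : (gaussVec m (N : NNReal)⁻¹).map (fun b j => √N * b j)
        = Measure.pi fun _ : Fin m => gaussianReal 0 1 := by
      rw [gaussVec, Measure.pi_map_pi (fun _ => by fun_prop), hentry]
    rw [← map_pi_eq_stdGaussian, ← this, Measure.map_map (by fun_prop) (by fun_prop)]
    rfl
  have : SigmaFinite ((gaussVec m (N : NNReal)⁻¹).map (fun b => WithLp.toLp 2 (√N • b))) := by
    rw [hrow]
    infer_instance
  rw [← hrow]
  exact Measure.pi_map_pi (μ := fun _ : Fin N => gaussVec m (N : NNReal)⁻¹)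
    (f := fun _ b => WithLp.toLp 2 (√N • b)) (fun _ => by fun_prop)

lemma measurable_scaledRows {N m : ℕ} : Measurable (scaledRows (N := N) (m := m)) := by
  unfold scaledRows
  fun_prop

lemma NoiseRegime.iidGaussVec_not_noiseEvent_le {N m : ℕ} {n κ ρ L : ℝ} {v : Fin N → ℝ}
    (h : NoiseRegime N n κ ρ L) (hN : N ≤ exp L) (hm : m ≤ n)
    (hq : BalancedSignal (fun i => √N * v i) κ ρ) :
    iidGaussVec N m (N : NNReal)⁻¹
        {B | ¬ NoiseEvent (fun i => √N * v i) (κ * N / ρ) L (scaledRows B)}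
      ≤ ofReal (12 * exp (-(2 * L))) := by
  have hbound := h.measure_pi_not_noiseEvent_le (E := EuclideanSpace ℝ (Fin m)) hN
    (by rwa [finrank_euclideanSpace, Fintype.card_fin]) hq
  rw [← map_scaledRows_iidGaussVec m (Nat.cast_pos.1 h.N_pos)] at hbound
  exact (Measure.le_map_apply measurable_scaledRows.aemeasurable _).trans hbound

lemma ofReal_one_sub_le_measure {X : Type*} [MeasurableSpace X] {μ : Measure X}
    [IsProbabilityMeasure μ] {ε : ℝ} (hε : 0 ≤ ε) {S : Set X} (hS : μ Sᶜ ≤ ofReal ε) :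
    ofReal (1 - ε) ≤ μ S := by
  rw [ENNReal.ofReal_sub _ hε, ENNReal.ofReal_one, tsub_le_iff_right]
  calc 1 = μ (S ∪ Sᶜ) := by rw [Set.union_compl_self, measure_univ]
    _ ≤ μ S + ofReal ε := (measure_union_le _ _).trans (by gcongr)

lemma mul_measure_le_prod {X Y : Type*} [MeasurableSpace X] [MeasurableSpace Y] {μ : Measure X}
    {ν : Measure Y} [SFinite ν] {p : ENNReal} {G : Set X} {S : Set (X × Y)}
    (hS : ∀ x ∈ G, p ≤ ν (Prod.mk x ⁻¹' S)) : p * μ G ≤ μ.prod ν S := by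
  have hmeas := measurableSet_toMeasurable (μ.prod ν) S
  rw [← measure_toMeasurable S, Measure.prod_apply hmeas]
  calc p * μ G ≤ p * μ {x | p ≤ ν (Prod.mk x ⁻¹' toMeasurable (μ.prod ν) S)} := by
        gcongr
        exact fun x hx => (hS x hx).trans
          (measure_mono (Set.preimage_mono (subset_toMeasurable _ _)))
    _ ≤ _ := mul_meas_ge_le_lintegral (measurable_measure_prodMk_left hmeas) _

lemma ofReal_one_sub_le_prod {X Y : Type*} [MeasurableSpace X] [MeasurableSpace Y]
    {μ : Measure X} {ν : Measure Y} [IsProbabilityMeasure μ] [IsProbabilityMeasure ν] {δ : ℝ}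
    (hδ : 0 ≤ δ) (hδ1 : δ ≤ 1) {G : Set X} {S : Set (X × Y)} (hG : μ Gᶜ ≤ ofReal (δ / 2))
    (hS : ∀ x ∈ G, ν {y | (x, y) ∉ S} ≤ ofReal (δ / 2)) :
    ofReal (1 - δ) ≤ μ.prod ν S :=
  calc ofReal (1 - δ) ≤ ofReal (1 - δ / 2) * ofReal (1 - δ / 2) := by
        rw [← ENNReal.ofReal_mul (by linarith)]
        exact ENNReal.ofReal_le_ofReal (by nlinarith [sq_nonneg δ])
    _ ≤ ofReal (1 - δ / 2) * μ G := by
        gcongr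
        exact ofReal_one_sub_le_measure (by positivity) hG
    _ ≤ μ.prod ν S :=
        mul_measure_le_prod fun x hx => ofReal_one_sub_le_measure (by positivity) (hS x hx)

end Probability

section Parameters

variable {N n κ ρ δ c : ℝ}

lemma le_exp_log_div (hN : 0 < N) (hδ : 0 < δ) (hδ1 : δ ≤ 1) : N ≤ exp (log (N / δ)) := by
  rw [Real.exp_log (by positivity)]
  exact le_div_self hN.le hδ hδ1

lemma twelve_mul_exp_neg_two_mul_log_div_le (hN : 5 ≤ N) (hδ : 0 < δ) (hδ1 : δ ≤ 1) :
    12 * exp (-(2 * log (N / δ))) ≤ δ / 2 := by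
  have : 0 < N := by linarith
  have hexp : exp (-(2 * log (N / δ))) = δ * (δ / N ^ 2) := by
    rw [Real.exp_neg, two_mul, Real.exp_add, Real.exp_log (by positivity)]
    field_simp
  have : δ / N ^ 2 ≤ 1 / 5 ^ 2 := by gcongr
  rw [hexp]
  nlinarith

lemma log_two_le_log_one_div (hδ : 0 < δ) (hδ2 : δ ≤ 1 / 2) : log 2 ≤ log (1 / δ) :=
  Real.log_le_log (by norm_num) (by rwa [le_div_iff₀ hδ, mul_comm, ← le_div_iff₀ two_pos])

lemma NoiseRegime.of_exp_le (hκ : 0 < κ) (hκ1 : κ ≤ 1) (hρ : 0 < ρ) (hρ1 : ρ ≤ 1) (hn : 1 ≤ n)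
    (hδ : 0 < δ) (hδ2 : δ ≤ 1 / 2) (hc : 10 ^ 8 * (4100 * c) = κ ^ 2) (hN : exp (1 / c ^ 2) ≤ N)
    (hL7 : log (N / δ) ^ 7 ≤ N) (hρN : 12 * log (1 / δ) ≤ κ ^ 2 * (N * ρ))
    (hsmall : (n * ρ / √N + √(n / N)) * log (N / δ) ≤ c) :
    NoiseRegime N n κ ρ (log (N / δ)) := by
  have hN0 : 0 < N := (Real.exp_pos _).trans_le hN
  have hc0 : 0 < c := by linarith [pow_pos hκ 2]
  have hinv : 1 / c ^ 2 ≤ log (N / δ) :=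
    Real.exp_le_exp.1 (hN.trans (le_exp_log_div hN0 hδ (by linarith)))
  have hL : 1 ≤ log (N / δ) := by
    have hc1 : c ≤ 1 := by linarith [pow_le_one₀ (n := 2) hκ.le hκ1]
    exact ((one_le_div (by positivity)).2 (pow_le_one₀ hc0.le hc1)).trans hinv
  refine .of_small hκ hκ1 hρ hρ1 hn hL ?_ hc ?_ hL7 hsmall
  · have : κ ^ 2 * (N * ρ) ≤ N * ρ :=
      mul_le_of_le_one_left (by positivity) (pow_le_one₀ hκ.le hκ1)
    linarith [log_two_le_log_one_div hδ hδ2, Real.log_two_gt_d9]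
  · rwa [div_le_iff₀' (by positivity)] at hinv

end Parameters

end PlantedVector

/-- exact recovery of a planted Bernoulli–Rademacher vector, Gaussian basis:
in the Gaussian-basis model with planted `v ∼ BR(N, ρ)` and observation `Ỹ = YQ`, with `ũ`
the unit leading eigenvector of `M̃`, for every constant `c₁ ∈ (0, 0.1)` there exist
constants `C₂, c₃ > 0` (depending only on `c₁`) and an absolute constant `N₀` such that for
every `δ ∈ (0, 1/2)`: if `N ≥ log⁷(N/δ)`, `ρ ≥ C₂ log(1/δ)/N`, `|ρ - 1/3| ≥ c₁` and
`(nρ/√N + √(n/N)) log(N/δ) ≤ c₃`, then with probability at least `1 - δ` there is a sign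
`s ∈ {±1}` with `(1/√(Nρ)) sign(s (Ỹũ)_j) 1{|(Ỹũ)_j| ≥ 0.5/√(Nρ)} = v_j` for all `j`. -/
theorem stmt_8 (c₁ : ℝ) (hc₁ : 0 < c₁) (hc₁' : c₁ < 0.1) :
    ∃ C₂ : ℝ, 0 < C₂ ∧ ∃ c₃ : ℝ, 0 < c₃ ∧ ∃ N₀ : ℕ,
      ∀ (N n : ℕ) (ρ δ : ℝ), N₀ ≤ N → 1 ≤ n → n ≤ N → 0 < ρ → ρ ≤ 1 →
        0 < δ → δ < 1 / 2 →
        (Real.log (N / δ)) ^ 7 ≤ N →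
        C₂ * Real.log (1 / δ) / N ≤ ρ →
        c₁ ≤ |ρ - 1 / 3| →
        ((n : ℝ) * ρ / Real.sqrt N + Real.sqrt ((n : ℝ) / N)) * Real.log (N / δ) ≤ c₃ →
        ∀ Q : Matrix (Fin n) (Fin n) ℝ, Qᵀ * Q = 1 →
        ENNReal.ofReal (1 - δ) ≤
          ((brVec N ρ).prod (iidGaussVec N (n - 1) ((N : NNReal))⁻¹))
            {w | ∀ u : Fin n → ℝ,
              IsLeadingEigen (specMat (gaussBasis w.1 w.2 * Q)) u →
              ∃ s : ℝ, (s = 1 ∨ s = -1) ∧ ∀ j : Fin N,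
                (Real.sqrt (N * ρ))⁻¹
                    * Real.sign (s * (gaussBasis w.1 w.2 * Q).mulVec u j)
                    * Set.indicator {x : ℝ | 0.5 * (Real.sqrt (N * ρ))⁻¹ ≤ |x|} 1
                        ((gaussBasis w.1 w.2 * Q).mulVec u j)
                  = w.1 j} := by
  set κ : ℝ := c₁ / 100 with hκ_def
  have hκ : 0 < κ := by positivity
  have hκ1 : κ ≤ 1 := by norm_num at hc₁'; linarith
  set c₃ : ℝ := κ ^ 2 / (10 ^ 8 * 4100) with hc₃
  refine ⟨12 / κ ^ 2, by positivity, c₃, by positivity, ⌈Real.exp (1 / c₃ ^ 2)⌉₊ + 5,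
    fun N n ρ δ hN₀ hn _ hρ hρ1 hδ hδ2 hL7 hρN hgap hsmall Q hQ => ?_⟩
  obtain ⟨m, rfl⟩ := Nat.exists_eq_add_of_le' hn
  have hN : 0 < N := by omega
  have hN5 : (5 : ℝ) ≤ N := by exact_mod_cast (Nat.le_add_left 5 _).trans hN₀
  have hNexp : Real.exp (1 / c₃ ^ 2) ≤ N := (Nat.le_ceil _).trans (by exact_mod_cast by omega)
  have hsize : 12 * Real.log (1 / δ) ≤ κ ^ 2 * (N * ρ) := by
    rw [div_mul_eq_mul_div, div_div, div_le_iff₀ (by positivity)] at hρN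
    linarith
  have hregime := PlantedVector.NoiseRegime.of_exp_le hκ hκ1 hρ hρ1 (by exact_mod_cast hn) hδ
    hδ2.le (by rw [hc₃]; ring) hNexp hL7 hsize hsmall
  have := PlantedVector.isProbabilityMeasure_brVec N hρ.le hρ1
  refine PlantedVector.ofReal_one_sub_le_prod hδ.le (by linarith)
    (PlantedVector.brVec_not_isTypical_le hN hρ hρ1 hκ.le hκ1 hδ hδ2.le hsize) fun v hv => ?_
  have hnoise := (hregime.iidGaussVec_not_noiseEvent_le (m := m)
    (PlantedVector.le_exp_log_div (by linarith) hδ (by linarith)) (by simp)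
    (hv.balancedSignal hN hρ)).trans (ENNReal.ofReal_le_ofReal
      (PlantedVector.twelve_mul_exp_neg_two_mul_log_div_le hN5 hδ (by linarith)))
  refine le_trans (measure_mono fun B hB => ?_) hnoise
  exact fun hz => hB fun u hu =>
    hv.exists_sign_round_eq hN hρ hρ1 hκ hregime.one_le_L (by linarith) hz hQ hu
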